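/- There exists an absolute constant C such that for every odd prime p and every A ⊆ F_p, the number T(A) of collinear ordered triples of points in A×A satisfies 0 ≤ T(A) − |A|⁶/p ≤ C·min{p^{1/2}·|A|^{7/2}, |A|^{9/2}}. -/

import Mathlib

open Finset

/-- `collinearTriples p A` is the number of ordered triples of points
`((x₁,y₁),(x₂,y₂),(x₃,y₃)) ∈ (A×A)³` which are collinear, i.e. satisfy
`(x₂−x₁)(y₃−y₁) = (x₃−x₁)(y₂−y₁)`. -/
def collinearTriples (p : ℕ) (A : Finset (ZMod p)) : ℕ :=
  ((((A ×ˢ A) ×ˢ (A ×ˢ A)) ×ˢ (A ×ˢ A)).filter fun x =>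
    (x.1.2.1 - x.1.1.1) * (x.2.2 - x.1.1.2) = (x.2.1 - x.1.1.1) * (x.1.2.2 - x.1.1.2)).card

section stmt6aux
open MvPolynomial

/-- restriction to a left line -/
noncomputable def evL {K : Type*} [Field K] (f0 f1 y : K) :
    MvPolynomial (Fin 3) K →ₐ[K] Polynomial K :=
  MvPolynomial.aeval ![Polynomial.C f0 + Polynomial.C f1 * Polynomial.X, Polynomial.C y,
    Polynomial.X]

/-- restriction to a right line -/
noncomputable def evR {K : Type*} [Field K] (f0 f1 x : K) :
    MvPolynomial (Fin 3) K →ₐ[K] Polynomial K :=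
  MvPolynomial.aeval ![Polynomial.C f0 + Polynomial.C f1 * Polynomial.X, Polynomial.X,
    Polynomial.C x]

lemma cnt_aux {K : Type*} [Field K] {ι : Type*} (V : Finset ι) (y : ι → K)
    (hy : Set.InjOn y V) (r : MvPolynomial (Fin 2) K) (hr : r ≠ 0)
    (h : ∀ i ∈ V, MvPolynomial.aeval ![Polynomial.C (y i), (Polynomial.X : Polynomial K)] r = 0) :
    V.card ≤ r.totalDegree := by
  classical
  set q := finSuccEquiv K 1 r with hq
  have hq0 : q ≠ 0 := by
    rw [hq]; simpa using hr
  have hroot : ∀ i ∈ V, q.IsRoot (C (y i)) := by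
    intro i hi
    have h1 := h i hi
    let φ : MvPolynomial (Fin 1) K →ₐ[K] Polynomial K := MvPolynomial.aeval fun _ => Polynomial.X
    have hφ : Function.Injective φ := by
      have : φ = (MvPolynomial.uniqueAlgEquiv K (Fin 1)).toAlgHom := by
        ext i; simp [φ]
      rw [this]
      exact (MvPolynomial.uniqueAlgEquiv K (Fin 1)).injective
    have key : MvPolynomial.aeval ![Polynomial.C (y i), (Polynomial.X : Polynomial K)] =
        (φ.comp ((Polynomial.aeval (C (y i) : MvPolynomial (Fin 1) K)).restrictScalars K)).comp
          (finSuccEquiv K 1).toAlgHom := by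
      apply MvPolynomial.algHom_ext
      intro j
      fin_cases j
      · simp [φ, finSuccEquiv_X_zero]
      · simp [φ]
        have := finSuccEquiv_X_succ (R := K) (n := 1) (j := 0)
        simp at this
        rw [this]; simp
    rw [key] at h1
    apply hφ
    simpa [hq, Polynomial.aeval_def, Polynomial.eval₂_eq_eval_map] using h1
  have hsub : V.image (fun i => (C (y i) : MvPolynomial (Fin 1) K)) ⊆ q.roots.toFinset := by
    intro a ha
    obtain ⟨i, hi, rfl⟩ := Finset.mem_image.mp ha
    simp only [Multiset.mem_toFinset, Polynomial.mem_roots hq0]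
    exact hroot i hi
  have hcard : (V.image (fun i => (C (y i) : MvPolynomial (Fin 1) K))).card = V.card := by
    apply Finset.card_image_of_injOn
    intro a ha b hb hab
    exact hy ha hb (C_injective _ _ hab)
  calc V.card ≤ q.roots.toFinset.card := hcard ▸ Finset.card_le_card hsub
    _ ≤ q.roots.card := Multiset.toFinset_card_le _
    _ ≤ q.natDegree := Polynomial.card_roots' _
    _ = degreeOf 0 r := natDegree_finSuccEquiv r
    _ ≤ _ := degreeOf_le_totalDegree _ _

lemma evL_eq {K : Type*} [Field K] (f0 f1 y : K) (Q : MvPolynomial (Fin 3) K) :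
    evL f0 f1 y Q = Polynomial.eval₂
      (MvPolynomial.aeval ![Polynomial.C y, (Polynomial.X : Polynomial K)]).toRingHom
      (Polynomial.C f0 + Polynomial.C f1 * Polynomial.X) (finSuccEquiv K 2 Q) := by
  induction Q using MvPolynomial.induction_on with
  | C a => simp [evL, finSuccEquiv_apply]; 
  | add p q hp hq => simp only [map_add, Polynomial.eval₂_add, hp, hq]
  | mul_X p i hp =>
    rw [map_mul, map_mul, Polynomial.eval₂_mul, hp]
    congr 1
    fin_cases i
    · simp [evL, finSuccEquiv_X_zero]
    · have := finSuccEquiv_X_succ (R := K) (n := 2) (j := 0)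
      simp at this
      simp [evL, this]
    · have := finSuccEquiv_X_succ (R := K) (n := 2) (j := 1)
      simp at this
      simp [evL, this]

lemma sfree_aux {K : Type*} [Field K] {ι : Type*} (V : Finset ι) (y f0 f1 : ι → K)
    (hy : Set.InjOn y V) (Q : MvPolynomial (Fin 3) K) (hQ : Q ≠ 0)
    (hS : (finSuccEquiv K 2 Q).natDegree = 0)
    (h : ∀ i ∈ V, evL (f0 i) (f1 i) (y i) Q = 0) :
    V.card ≤ Q.totalDegree := by
  obtain ⟨r, hr⟩ : ∃ r, finSuccEquiv K 2 Q = Polynomial.C r :=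
    ⟨_, Polynomial.eq_C_of_natDegree_eq_zero hS⟩
  have hr0 : r ≠ 0 := by
    rintro rfl
    simp at hr
    exact hQ hr
  have hc : (finSuccEquiv K 2 Q).coeff 0 = r := by rw [hr]; simp
  have := totalDegree_coeff_finSuccEquiv_add_le Q 0 (by rw [hc]; exact hr0)
  rw [hc] at this
  refine le_trans (cnt_aux V y hy r hr0 ?_) (by omega)
  intro i hi
  have := h i hi
  rw [evL_eq, hr] at this
  simpa using this

lemma det_deg {K : Type*} [Field K] (f g : Polynomial (MvPolynomial (Fin 2) K)) (m n e d : ℕ)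
    (hf : ∀ i, (f.coeff i).totalDegree ≤ e) (hg : ∀ i, (g.coeff i).totalDegree ≤ d) :
    (f.resultant g m n).totalDegree ≤ m * d + n * e := by
  rw [Polynomial.resultant, Matrix.det_apply]
  refine (totalDegree_finsetSum _ _).trans (Finset.sup_le fun σ _ => ?_)
  have h1 : (∏ i, (f.sylvester g m n) (σ i) i).totalDegree ≤ m * d + n * e := by
    refine (totalDegree_finsetProd _ _).trans ?_
    rw [Fin.sum_univ_add]
    refine add_le_add ?_ ?_
    · refine (Finset.sum_le_card_nsmul _ _ d ?_).trans (by simp)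
      intro i _
      simp only [Polynomial.sylvester, Matrix.of_apply, Fin.addCases_left]
      split_ifs
      · exact hg _
      · simp
    · refine (Finset.sum_le_card_nsmul _ _ e ?_).trans (by simp)
      intro i _
      simp only [Polynomial.sylvester, Matrix.of_apply, Fin.addCases_right]
      split_ifs
      · exact hf _
      · simp
  rcases Int.units_eq_one_or (Equiv.Perm.sign σ) with h | h
  · rw [h]; simpa using h1
  · rw [h]; simpa using h1

lemma coeff_fse_deg {K : Type*} [Field K] (Q : MvPolynomial (Fin 3) K) (i : ℕ) :
    ((finSuccEquiv K 2 Q).coeff i).totalDegree ≤ Q.totalDegree := by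
  by_cases h : (finSuccEquiv K 2 Q).coeff i = 0
  · rw [h]; simp
  · have := totalDegree_coeff_finSuccEquiv_add_le Q i h
    omega

lemma bezout_aux {K : Type*} [Field K] {ι : Type*} (V : Finset ι) (y f0 f1 : ι → K)
    (hy : Set.InjOn y V) (Q F : MvPolynomial (Fin 3) K) (hQ : Irreducible Q)
    (hS : (finSuccEquiv K 2 Q).natDegree ≠ 0)
    (h1 : ∀ i ∈ V, evL (f0 i) (f1 i) (y i) Q = 0)
    (h2 : ∀ i ∈ V, evL (f0 i) (f1 i) (y i) F = 0)
    (hc : 2 * Q.totalDegree * F.totalDegree < V.card) : Q ∣ F := by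
  classical
  by_contra hdvd
  set q := finSuccEquiv K 2 Q with hq
  set f := finSuccEquiv K 2 F with hf
  have hqi : Irreducible q := (MulEquiv.irreducible_iff (finSuccEquiv K 2)).mpr hQ
  have hqf : ¬ q ∣ f := by
    rwa [hq, hf, map_dvd_iff]
  have hprim : q.IsPrimitive := hqi.isPrimitive hS
  let L := FractionRing (MvPolynomial (Fin 2) K)
  have hqL : Irreducible (q.map (algebraMap (MvPolynomial (Fin 2) K) L)) :=
    (Polynomial.IsPrimitive.irreducible_iff_irreducible_map_fraction_map hprim).mp hqi
  have hcop : IsCoprime (q.map (algebraMap (MvPolynomial (Fin 2) K) L))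
      (f.map (algebraMap (MvPolynomial (Fin 2) K) L)) := by
    rw [hqL.coprime_iff_not_dvd]
    intro hd
    exact hqf (hprim.dvd_of_fraction_map_dvd_fraction_map hd)
  have hres : q.resultant f ≠ 0 := by
    intro h0
    have h3 := Polynomial.resultant_map_map (f := q) (g := f) (m := q.natDegree) (n := f.natDegree)
      (algebraMap (MvPolynomial (Fin 2) K) L)
    rw [h0, map_zero] at h3
    have inj : Function.Injective (algebraMap (MvPolynomial (Fin 2) K) L) :=
      IsFractionRing.injective _ _
    have h4 := (Polynomial.resultant_eq_zero_iff
      (f := q.map (algebraMap (MvPolynomial (Fin 2) K) L))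
      (g := f.map (algebraMap (MvPolynomial (Fin 2) K) L))).mp (by
        rw [Polynomial.natDegree_map_eq_of_injective inj,
          Polynomial.natDegree_map_eq_of_injective inj]; exact h3)
    exact h4.2 hcop
  obtain ⟨a, b, -, -, hab⟩ := Polynomial.exists_mul_add_mul_eq_C_resultant q f le_rfl le_rfl
    (Or.inl hS)
  have hcnt := cnt_aux V y hy _ hres (by
    intro i hi
    have e1 := h1 i hi
    have e2 := h2 i hi
    rw [evL_eq] at e1 e2
    have := congrArg (Polynomial.eval₂
      (MvPolynomial.aeval ![Polynomial.C (y i), (Polynomial.X : Polynomial K)]).toRingHom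
      (Polynomial.C (f0 i) + Polynomial.C (f1 i) * Polynomial.X)) hab
    rw [Polynomial.eval₂_add, Polynomial.eval₂_mul, Polynomial.eval₂_mul, e1, e2] at this
    simpa using this.symm)
  have hd := det_deg q f q.natDegree f.natDegree _ _ (coeff_fse_deg Q) (coeff_fse_deg F)
  have hq1 : q.natDegree ≤ Q.totalDegree := by
    rw [hq, natDegree_finSuccEquiv]; exact degreeOf_le_totalDegree _ _
  have hf1 : f.natDegree ≤ F.totalDegree := by
    rw [hf, natDegree_finSuccEquiv]; exact degreeOf_le_totalDegree _ _
  have := Nat.mul_le_mul hq1 (le_refl F.totalDegree)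
  have := Nat.mul_le_mul hf1 (le_refl Q.totalDegree)
  nlinarith

lemma chain_aux {K A σ : Type*} [Field K] [CommRing A] [Algebra K A] [Fintype σ]
    (D : Derivation K A A) (g : σ → A) (Q : MvPolynomial σ K) :
    D (MvPolynomial.aeval g Q) = ∑ i, MvPolynomial.aeval g (pderiv i Q) * D (g i) := by
  classical
  induction Q using MvPolynomial.induction_on with
  | C a => simp
  | add p q hp hq => simp only [map_add, hp, hq, add_mul, Finset.sum_add_distrib]
  | mul_X p j hp =>
    rw [map_mul, Derivation.leibniz, hp, aeval_X]
    simp only [Derivation.leibniz, smul_eq_mul, map_add, map_mul, aeval_X, pderiv_X, add_mul,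
      Finset.sum_add_distrib]
    congr 1
    · rw [Finset.sum_eq_single j]
      · simp
      · intro b _ hb
        simp [hb.symm]
      · simp
    · rw [Finset.mul_sum]
      refine Finset.sum_congr rfl fun i _ => by ring

lemma pderiv_comm_aux {K σ : Type*} [Field K] (i j : σ) (Q : MvPolynomial σ K) :
    pderiv i (pderiv j Q) = pderiv j (pderiv i Q) := by
  classical
  by_cases hij : i = j
  · subst hij; rfl
  ext m
  simp only [coeff_pderiv, Finsupp.add_apply, Finsupp.single_apply, hij, Ne.symm hij, if_false]
  rw [add_right_comm]
  push_cast
  ring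

/-- curvature-type polynomial -/
noncomputable def FF {K : Type*} [Field K] (v : Fin 3) (P : MvPolynomial (Fin 3) K) :
    MvPolynomial (Fin 3) K :=
  pderiv 0 (pderiv 0 P) * (pderiv v P) ^ 2
    - 2 * pderiv 0 P * pderiv v P * pderiv 0 (pderiv v P)
    + (pderiv 0 P) ^ 2 * pderiv v (pderiv v P)

lemma evL_deriv {K : Type*} [Field K] (f0 f1 y : K) (P : MvPolynomial (Fin 3) K) :
    Polynomial.derivative (evL f0 f1 y P) =
      evL f0 f1 y (pderiv 0 P) * Polynomial.C f1 + evL f0 f1 y (pderiv 2 P) := by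
  have := chain_aux (Polynomial.derivative' : Derivation K (Polynomial K) (Polynomial K))
    ![Polynomial.C f0 + Polynomial.C f1 * Polynomial.X, Polynomial.C y, Polynomial.X] P
  simpa [Fin.sum_univ_three, Polynomial.derivative', evL] using this

lemma evR_deriv {K : Type*} [Field K] (f0 f1 y : K) (P : MvPolynomial (Fin 3) K) :
    Polynomial.derivative (evR f0 f1 y P) =
      evR f0 f1 y (pderiv 0 P) * Polynomial.C f1 + evR f0 f1 y (pderiv 1 P) := by
  have := chain_aux (Polynomial.derivative' : Derivation K (Polynomial K) (Polynomial K))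
    ![Polynomial.C f0 + Polynomial.C f1 * Polynomial.X, Polynomial.X, Polynomial.C y] P
  simpa [Fin.sum_univ_three, Polynomial.derivative', evR] using this

lemma evL_FF {K : Type*} [Field K] (f0 f1 y : K) (P : MvPolynomial (Fin 3) K)
    (h : evL f0 f1 y P = 0) : evL f0 f1 y (FF 2 P) = 0 := by
  have h1 := evL_deriv f0 f1 y P
  rw [h, Polynomial.derivative_zero] at h1
  have h2 := congrArg Polynomial.derivative h1
  simp only [Polynomial.derivative_zero, Polynomial.derivative_add, Polynomial.derivative_mul,
    Polynomial.derivative_C, evL_deriv] at h2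
  rw [pderiv_comm_aux 2 0] at h2
  simp only [FF, map_add, map_sub, map_mul, map_pow, map_ofNat]
  have h3 : evL f0 f1 y (pderiv 2 P) = - (evL f0 f1 y (pderiv 0 P) * Polynomial.C f1) := by
    linear_combination -h1
  rw [h3]
  linear_combination -(evL f0 f1 y (pderiv 0 P))^2 * h2

lemma evR_FF {K : Type*} [Field K] (f0 f1 y : K) (P : MvPolynomial (Fin 3) K)
    (h : evR f0 f1 y P = 0) : evR f0 f1 y (FF 1 P) = 0 := by
  have h1 := evR_deriv f0 f1 y P
  rw [h, Polynomial.derivative_zero] at h1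
  have h2 := congrArg Polynomial.derivative h1
  simp only [Polynomial.derivative_zero, Polynomial.derivative_add, Polynomial.derivative_mul,
    Polynomial.derivative_C, evR_deriv] at h2
  rw [pderiv_comm_aux 1 0] at h2
  simp only [FF, map_add, map_sub, map_mul, map_pow, map_ofNat]
  have h3 : evR f0 f1 y (pderiv 1 P) = - (evR f0 f1 y (pderiv 0 P) * Polynomial.C f1) := by
    linear_combination -h1
  rw [h3]
  linear_combination -(evR f0 f1 y (pderiv 0 P))^2 * h2

lemma FF_mul {K : Type*} [Field K] (v : Fin 3) (Q R : MvPolynomial (Fin 3) K) :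
    Q ∣ FF v (Q * R) - R ^ 3 * FF v Q := by
  rw [← Ideal.Quotient.eq_zero_iff_dvd]
  have hQ : Ideal.Quotient.mk (Ideal.span {Q}) Q = 0 := by
    rw [Ideal.Quotient.eq_zero_iff_dvd]
  simp only [FF, Derivation.leibniz, smul_eq_mul, map_add, map_sub, map_mul, map_pow, map_ofNat, hQ]
  rw [pderiv_comm_aux 0 v Q]
  ring

lemma pderiv_deg {K : Type*} [Field K] (i : Fin 3) (P : MvPolynomial (Fin 3) K) :
    (pderiv i P).totalDegree ≤ P.totalDegree - 1 := by
  classical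
  refine Finset.sup_le fun m hm => ?_
  rw [mem_support_iff, coeff_pderiv] at hm
  have h1 : coeff (m + Finsupp.single i 1) P ≠ 0 := left_ne_zero_of_mul hm
  have h2 := le_totalDegree (mem_support_iff.mpr h1)
  rw [Finsupp.sum_add_index' (by simp) (by simp)] at h2
  simp only [Finsupp.sum_single_index] at h2
  omega

lemma FF_deg {K : Type*} [Field K] (v : Fin 3) (P : MvPolynomial (Fin 3) K) :
    (FF v P).totalDegree ≤ 3 * P.totalDegree := by
  have h0 : ∀ i, (pderiv i P).totalDegree ≤ P.totalDegree := fun i =>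
    (pderiv_deg i P).trans (Nat.sub_le _ _)
  have h1 : ∀ i j, (pderiv i (pderiv j P)).totalDegree ≤ P.totalDegree := fun i j =>
    ((pderiv_deg i _).trans (Nat.sub_le _ _)).trans (h0 j)
  have a1 := totalDegree_pow (pderiv v P) 2
  have a2 := totalDegree_pow (pderiv 0 P) 2
  have b1 := h0 v
  have b2 := h0 0
  have c1 := h1 0 0
  have c2 := h1 0 v
  have c3 := h1 v v
  unfold FF
  refine (totalDegree_add _ _).trans (max_le ((totalDegree_sub _ _).trans (max_le ?_ ?_)) ?_)
  · refine (totalDegree_mul _ _).trans ?_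
    omega
  · have e2 : (2 : MvPolynomial (Fin 3) K).totalDegree = 0 := by
      have : (2 : MvPolynomial (Fin 3) K) = C 2 := (map_ofNat C 2).symm
      rw [this, totalDegree_C]
    have d1 := totalDegree_mul (2 * pderiv 0 P * pderiv v P) (pderiv 0 (pderiv v P))
    have d2 := totalDegree_mul (2 * pderiv 0 P) (pderiv v P)
    have d3 := totalDegree_mul 2 (pderiv 0 P)
    omega
  · refine (totalDegree_mul _ _).trans ?_
    omega

lemma sfree_of_pderiv {K : Type*} [Field K] (p : ℕ) [CharP K p] (Q : MvPolynomial (Fin 3) K)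
    (hd : Q.totalDegree < p) (h : pderiv 0 Q = 0) : (finSuccEquiv K 2 Q).natDegree = 0 := by
  classical
  rw [natDegree_finSuccEquiv, ← Nat.le_zero, degreeOf_le_iff]
  intro m hm
  by_contra hne
  have hne : 1 ≤ m 0 := by omega
  have h1 := congrArg (coeff (m - Finsupp.single 0 1)) h
  rw [coeff_pderiv, coeff_zero, tsub_add_cancel_of_le (by
    rw [Finsupp.single_le_iff]; exact hne)] at h1
  rcases mul_eq_zero.mp h1 with h2 | h2
  · exact (mem_support_iff.mp hm) h2
  · simp only [Finsupp.tsub_apply, Finsupp.single_eq_same] at h2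
    have h3 : ((m 0 : ℕ) : K) = 0 := by
      rw [← h2, Nat.cast_sub hne]; simp
    rw [CharP.cast_eq_zero_iff K p] at h3
    have h4 := Nat.le_of_dvd hne h3
    have h5 := (monomial_le_degreeOf 0 hm).trans (degreeOf_le_totalDegree Q 0)
    omega

lemma aeval_totalDegree_le_aux {K σ τ : Type*} [Field K]
    (F : MvPolynomial σ K) (f : σ → MvPolynomial τ K) (n : ℕ) (hf : ∀ i, (f i).totalDegree ≤ n) :
    (MvPolynomial.aeval f F).totalDegree ≤ F.totalDegree * n := by
  rw [MvPolynomial.aeval_def, MvPolynomial.eval₂]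
  refine (totalDegree_finsetSum _ _).trans (Finset.sup_le fun d hd => ?_)
  refine (totalDegree_mul _ _).trans ?_
  have h1 : ∀ r : K, (algebraMap K (MvPolynomial τ K) r).totalDegree = 0 := totalDegree_C
  rw [h1]
  have h2 : (d.prod fun i k => f i ^ k).totalDegree ≤ d.sum (fun _ k => k * n) := by
    refine (totalDegree_finsetProd _ _).trans ?_
    refine Finset.sum_le_sum fun i _ => (totalDegree_pow _ _).trans ?_
    exact Nat.mul_le_mul_left _ (hf i)
  have h3 : d.sum (fun _ k => k * n) = (d.sum fun _ k => k) * n := by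
    simp only [Finsupp.sum, Finset.sum_mul]
  have h4 := Nat.mul_le_mul_right n (le_totalDegree hd)
  omega

lemma lo_mul {K σ : Type*} [Field K] (k : ℕ) (G H : MvPolynomial σ K)
    (hH : ∀ μ, Finsupp.degree μ < k → coeff μ H = 0) (μ : σ →₀ ℕ)
    (hμ : Finsupp.degree μ ≤ k) : coeff μ (G * H) = coeff 0 G * coeff μ H := by
  classical
  rw [coeff_mul, Finset.sum_eq_single (0, μ)]
  · rintro ⟨a, b⟩ hab hne
    rw [Finset.HasAntidiagonal.mem_antidiagonal] at hab
    simp only at hab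
    have h1 : Finsupp.degree a + Finsupp.degree b = Finsupp.degree μ := by
      rw [← hab, map_add]
    have h2 : Finsupp.degree a ≠ 0 := by
      intro h
      rw [Finsupp.degree_eq_zero_iff] at h
      subst h
      apply hne
      rw [zero_add] at hab
      rw [hab]
    rw [hH b (by omega), mul_zero]
  · intro h
    exact absurd (by simp) h

lemma lo_pderiv {K σ : Type*} [Field K] (k : ℕ) (i : σ) (H : MvPolynomial σ K)
    (hH : ∀ μ, Finsupp.degree μ < k + 1 → coeff μ H = 0) :
    ∀ μ, Finsupp.degree μ < k → coeff μ (pderiv i H) = 0 := by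
  intro μ hμ
  rw [coeff_pderiv, hH, zero_mul]
  rw [map_add, Finsupp.degree_single]
  omega

lemma ode_step {K : Type*} [Field K] (p : ℕ) [CharP K p] (q G M N : MvPolynomial (Fin 2) K)
    (i : Fin 2) (hG : coeff 0 G ≠ 0)
    (h : G * pderiv i (pderiv i q) = M * pderiv i q + N * q) (hd : q.totalDegree < p)
    (k : ℕ) (hk : ∀ μ, Finsupp.degree μ < k → coeff μ q = 0) (ν : Fin 2 →₀ ℕ)
    (hν : Finsupp.degree ν = k) (hi : 2 ≤ ν i) : coeff ν q = 0 := by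
  by_contra hne
  have hkk : ν i ≤ k := by rw [← hν]; exact Finsupp.le_degree i ν
  obtain ⟨k, rfl⟩ : ∃ k', k = k' + 1 + 1 := ⟨k - 2, by omega⟩
  set μ := ν - Finsupp.single i 2 with hμ
  have hμν : μ + Finsupp.single i 2 = ν := tsub_add_cancel_of_le (by
    rw [Finsupp.single_le_iff]; exact hi)
  have hμd : Finsupp.degree μ = k := by
    have := congrArg Finsupp.degree hμν
    rw [map_add, Finsupp.degree_single, hν] at this
    omega
  have h1 := lo_pderiv _ i _ hk
  have h2 := lo_pderiv _ i _ h1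
  have e := congrArg (coeff μ) h
  rw [coeff_add, lo_mul k G _ h2 μ hμd.le, lo_mul (k+1) M _ h1 μ (by omega),
    lo_mul (k+1+1) N _ hk μ (by omega), h1 μ (by omega), hk μ (by omega), mul_zero, mul_zero,
    add_zero, coeff_pderiv, coeff_pderiv, add_assoc, ← Finsupp.single_add, hμν] at e
  have hm : μ i = ν i - 2 := by simp [hμ]
  have cast : ∀ r : ℕ, 0 < r → r ≤ ν i → ((r : ℕ) : K) ≠ 0 := by
    intro r hr hrν hz
    rw [CharP.cast_eq_zero_iff K p] at hz
    have := Nat.le_of_dvd hr hz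
    have h5 := (monomial_le_degreeOf i (mem_support_iff.mpr hne)).trans (degreeOf_le_totalDegree q i)
    omega
  rcases mul_eq_zero.mp e with e | e
  · exact hG e
  rcases mul_eq_zero.mp e with e | e
  rcases mul_eq_zero.mp e with e | e
  · exact hne e
  · simp only [Finsupp.add_apply, Finsupp.single_eq_same, hm] at e
    refine cast (ν i - 2 + 1 + 1) (by omega) (by omega) ?_
    push_cast; push_cast at e; exact e
  · rw [hm] at e
    refine cast (ν i - 2 + 1) (by omega) (by omega) ?_
    push_cast; push_cast at e; exact e

lemma ode_zero {K : Type*} [Field K] (p : ℕ) [CharP K p] (q G M N M' N' : MvPolynomial (Fin 2) K)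
    (hG : coeff 0 G ≠ 0)
    (h0 : G * pderiv 0 (pderiv 0 q) = M * pderiv 0 q + N * q)
    (h1 : G * pderiv 1 (pderiv 1 q) = M' * pderiv 1 q + N' * q) (hd : q.totalDegree < p)
    (i0 : coeff 0 q = 0) (i1 : coeff 0 (pderiv 0 q) = 0) (i2 : coeff 0 (pderiv 1 q) = 0)
    (i3 : coeff 0 (pderiv 0 (pderiv 1 q)) = 0) : q = 0 := by
  have key : ∀ k : ℕ, ∀ ν, Finsupp.degree ν = k → coeff ν q = 0 := by
    intro k
    induction k using Nat.strong_induction_on with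
    | _ k ih =>
      intro ν hν
      have hk : ∀ μ, Finsupp.degree μ < k → coeff μ q = 0 := fun μ hμ => ih _ hμ μ rfl
      by_cases c0 : 2 ≤ ν 0
      · exact ode_step p q G M N 0 hG h0 hd k hk ν hν c0
      by_cases c1 : 2 ≤ ν 1
      · exact ode_step p q G M' N' 1 hG h1 hd k hk ν hν c1
      rw [coeff_pderiv] at i1 i2 i3
      rw [coeff_pderiv] at i3
      simp at i1 i2 i3
      have e : ν = Finsupp.single 0 (ν 0) + Finsupp.single 1 (ν 1) := by
        ext j; fin_cases j <;> simp
      have c0' : ν 0 = 0 ∨ ν 0 = 1 := by omega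
      have c1' : ν 1 = 0 ∨ ν 1 = 1 := by omega
      rw [e]
      rcases c0' with c | c <;> rcases c1' with c' | c' <;> rw [c, c'] <;> (try simp only [Finsupp.single_zero, add_zero, zero_add]) <;> assumption
  ext ν
  rw [coeff_zero]
  exact key _ ν rfl

lemma ode_id {R : Type*} [CommRing R] (e0 e2 e00 e02 e22 q q1 q11 b k F : R)
    (hF : F = e00 * e2 ^ 2 - 2 * e0 * e2 * e02 + e0 ^ 2 * e22) (hFk : F = q * k)
    (h1 : q1 = e0 * b + e2) (h11 : q11 = e00 * b ^ 2 + 2 * e02 * b + e22) :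
    e0 ^ 2 * q11 = (2 * e00 * e0 * b + 2 * e0 * e02 - e00 * q1) * q1 + k * q := by
  have h2 : e2 = q1 - e0 * b := by rw [h1]; ring
  subst h2
  rw [h11]
  linear_combination hFk - hF

lemma ode_main {K : Type*} [Field K] (p : ℕ) [CharP K p] (Q : MvPolynomial (Fin 3) K)
    (h1 : Q ∣ FF 1 Q) (h2 : Q ∣ FF 2 Q) (z : Fin 3 → K) (hz : eval z Q = 0)
    (hz' : eval z (pderiv 0 Q) ≠ 0) (hd : 2 * Q.totalDegree < p) :
    ∃ A0 A1 A2 A3 : K, MvPolynomial.aeval ![C A0 + C A1 * X 0 + C A2 * X 1 + C A3 * X 0 * X 1,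
      (X 0 : MvPolynomial (Fin 2) K), X 1] Q = 0 := by
  classical
  obtain ⟨k1, hk1⟩ := h1
  obtain ⟨k2, hk2⟩ := h2
  set e0 := eval z (pderiv 0 Q) with he0
  set α := - eval z (pderiv 2 Q) / e0 with hα
  set γ := - eval z (pderiv 1 Q) / e0 with hγ
  set δ := - ((eval z (pderiv 0 (pderiv 0 Q)) * γ + eval z (pderiv 1 (pderiv 0 Q))) * α
    + eval z (pderiv 0 (pderiv 2 Q)) * γ + eval z (pderiv 1 (pderiv 2 Q))) / e0 with hδ
  set g : Fin 3 → MvPolynomial (Fin 2) K :=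
    ![C (z 0) + C γ * X 0 + C α * X 1 + C δ * X 0 * X 1, C (z 1) + X 0, C (z 2) + X 1] with hg
  set b0 : MvPolynomial (Fin 2) K := C γ + C δ * X 1 with hb0
  set b1 : MvPolynomial (Fin 2) K := C α + C δ * X 0 with hb1
  have D0 : ∀ F : MvPolynomial (Fin 3) K, pderiv 0 (MvPolynomial.aeval g F) =
      MvPolynomial.aeval g (pderiv 0 F) * b0 + MvPolynomial.aeval g (pderiv 1 F) := by
    intro F
    rw [chain_aux]
    simp [Fin.sum_univ_three, hg, hb0, pderiv_X]
    left; ring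
  have D1 : ∀ F : MvPolynomial (Fin 3) K, pderiv 1 (MvPolynomial.aeval g F) =
      MvPolynomial.aeval g (pderiv 0 F) * b1 + MvPolynomial.aeval g (pderiv 2 F) := by
    intro F
    rw [chain_aux]
    simp [Fin.sum_univ_three, hg, hb1, pderiv_X]
  have cc : ∀ F : MvPolynomial (Fin 3) K, coeff 0 (MvPolynomial.aeval g F) = eval z F := by
    intro F
    rw [← constantCoeff_eq]
    induction F using MvPolynomial.induction_on with
    | C a => simp
    | add p q hp hq => simp only [map_add, hp, hq]
    | mul_X p j hp =>
      rw [map_mul, map_mul, map_mul, hp, aeval_X, eval_X]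
      congr 1
      fin_cases j <;> simp [hg]
  have d00 : pderiv 0 b0 = 0 := by simp [hb0, pderiv_X]
  have d11 : pderiv 1 b1 = 0 := by simp [hb1, pderiv_X]
  have d01 : pderiv 0 b1 = C δ := by simp [hb1, pderiv_X]
  have cb0 : coeff 0 b0 = γ := by rw [← constantCoeff_eq]; simp [hb0]
  have cb1 : coeff 0 b1 = α := by rw [← constantCoeff_eq]; simp [hb1]
  have hq : MvPolynomial.aeval g Q = 0 := by
    refine ode_zero p _ (MvPolynomial.aeval g (pderiv 0 Q) ^ 2) _ _ _ _ ?_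
      (ode_id (MvPolynomial.aeval g (pderiv 0 Q)) (MvPolynomial.aeval g (pderiv 1 Q))
        (MvPolynomial.aeval g (pderiv 0 (pderiv 0 Q)))
        (MvPolynomial.aeval g (pderiv 0 (pderiv 1 Q)))
        (MvPolynomial.aeval g (pderiv 1 (pderiv 1 Q))) _ _ _ b0 (MvPolynomial.aeval g k1)
        (MvPolynomial.aeval g (FF 1 Q)) ?_ ?_ (D0 Q) ?_)
      (ode_id (MvPolynomial.aeval g (pderiv 0 Q)) (MvPolynomial.aeval g (pderiv 2 Q))
        (MvPolynomial.aeval g (pderiv 0 (pderiv 0 Q)))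
        (MvPolynomial.aeval g (pderiv 0 (pderiv 2 Q)))
        (MvPolynomial.aeval g (pderiv 2 (pderiv 2 Q))) _ _ _ b1 (MvPolynomial.aeval g k2)
        (MvPolynomial.aeval g (FF 2 Q)) ?_ ?_ (D1 Q) ?_)
      ?_ ?_ ?_ ?_ ?_
    · rw [← constantCoeff_eq, map_pow, constantCoeff_eq, cc]
      exact pow_ne_zero _ hz'
    · simp only [FF, map_add, map_sub, map_mul, map_pow, map_ofNat]
    · rw [hk1, map_mul]
    · rw [D0, map_add, Derivation.leibniz, D0, D0, d00, pderiv_comm_aux 1 0]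
      simp only [smul_eq_mul]; ring
    · simp only [FF, map_add, map_sub, map_mul, map_pow, map_ofNat]
    · rw [hk2, map_mul]
    · rw [D1, map_add, Derivation.leibniz, D1, D1, d11, pderiv_comm_aux 2 0]
      simp only [smul_eq_mul]; ring
    · refine lt_of_le_of_lt (aeval_totalDegree_le_aux Q g 2 ?_) (by omega)
      have hX : ∀ i : Fin 2, (X i : MvPolynomial (Fin 2) K).totalDegree = 1 := fun i =>
        totalDegree_X i
      have hm : ∀ a b : MvPolynomial (Fin 2) K, ∀ m n, a.totalDegree ≤ m → b.totalDegree ≤ n →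
        (a * b).totalDegree ≤ m + n := fun a b m n ha hb =>
          (totalDegree_mul a b).trans (add_le_add ha hb)
      have ha : ∀ a b : MvPolynomial (Fin 2) K, ∀ m, a.totalDegree ≤ m → b.totalDegree ≤ m →
        (a + b).totalDegree ≤ m := fun a b m ha hb =>
          (totalDegree_add a b).trans (max_le ha hb)
      have hC : ∀ r : K, (C r : MvPolynomial (Fin 2) K).totalDegree ≤ 0 := fun r =>
        (totalDegree_C r).le
      have hX2 : ∀ i : Fin 2, (X i : MvPolynomial (Fin 2) K).totalDegree ≤ 1 := fun i => (hX i).le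
      have hC2 : ∀ r : K, (C r : MvPolynomial (Fin 2) K).totalDegree ≤ 2 := fun r => by
        rw [totalDegree_C]; omega
      have hX3 : ∀ i : Fin 2, (X i : MvPolynomial (Fin 2) K).totalDegree ≤ 2 := fun i => by
        rw [hX i]; omega
      intro i
      fin_cases i
      · refine ha _ _ _ (ha _ _ _ (ha _ _ _ (hC2 _) ?_) ?_) ?_
        · exact (hm _ _ 0 1 (hC _) (hX2 _)).trans (by omega)
        · exact (hm _ _ 0 1 (hC _) (hX2 _)).trans (by omega)
        · exact (hm _ _ 1 1 (hm _ _ 0 1 (hC _) (hX2 _)) (hX2 _)).trans (by omega)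
      · exact ha _ _ _ (hC2 _) (hX3 _)
      · exact ha _ _ _ (hC2 _) (hX3 _)
    · rw [cc, hz]
    · rw [D0, coeff_add, ← constantCoeff_eq, map_mul, constantCoeff_eq,
        cc, cc, cb0, ← he0, hγ]
      field_simp
      ring
    · rw [D1, coeff_add, ← constantCoeff_eq, map_mul, constantCoeff_eq,
        cc, cc, cb1, ← he0, hα]
      field_simp
      ring
    · rw [D1, map_add, Derivation.leibniz, D0, D0, d01]
      simp only [smul_eq_mul, coeff_add]
      simp only [← constantCoeff_eq, map_mul, map_add, constantCoeff_C]
      simp only [constantCoeff_eq, cc, cb0, cb1, ← he0]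
      rw [hδ]
      field_simp
      ring
  have e := congrArg (MvPolynomial.aeval ![(X 0 - C (z 1) : MvPolynomial (Fin 2) K),
    X 1 - C (z 2)]) hq
  rw [map_zero, comp_aeval_apply] at e
  refine ⟨z 0 - γ * z 1 - α * z 2 + δ * z 1 * z 2, γ - δ * z 2, α - δ * z 1, δ, ?_⟩
  rw [← e]
  congr 2
  funext i
  fin_cases i
  · simp [hg]; ring
  · simp [hg]
  · simp [hg]

lemma lin_factor {K : Type*} [Field K] (Q : MvPolynomial (Fin 3) K) (hQ : Irreducible Q)
    (A0 A1 A2 A3 : K)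
    (h : MvPolynomial.aeval ![C A0 + C A1 * X 0 + C A2 * X 1 + C A3 * X 0 * X 1,
      (X 0 : MvPolynomial (Fin 2) K), X 1] Q = 0) (g0 g1 x : K) (hx : evR g0 g1 x Q = 0) :
    g0 = A0 + A2 * x ∧ g1 = A1 + A3 * x := by
  set L : MvPolynomial (Fin 3) K :=
    X 0 - (C A0 + C A1 * X 1 + C A2 * X 2 + C A3 * X 1 * X 2) with hL
  have hdvd : L ∣ Q := by
    rw [← Ideal.Quotient.eq_zero_iff_dvd]
    have h1 := congrArg (MvPolynomial.aeval ![(X 1 : MvPolynomial (Fin 3) K), X 2]) h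
    rw [map_zero, comp_aeval_apply] at h1
    have h2 := congrArg (Ideal.Quotient.mkₐ K (Ideal.span {L})) h1
    rw [map_zero, comp_aeval_apply] at h2
    have h3 : (Ideal.Quotient.mkₐ K (Ideal.span {L})) Q = 0 := by
      rw [← h2]
      conv_lhs => rw [← aeval_X_left_apply Q, comp_aeval_apply]
      congr 2
      funext i
      have h4 : (Ideal.Quotient.mkₐ K (Ideal.span {L})) (X 0) =
          (Ideal.Quotient.mkₐ K (Ideal.span {L}))
            (C A0 + C A1 * X 1 + C A2 * X 2 + C A3 * X 1 * X 2) := by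
        rw [← sub_eq_zero, ← map_sub]
        exact (Ideal.Quotient.eq_zero_iff_dvd L _).mpr dvd_rfl
      fin_cases i
      · refine h4.trans ?_
        simp
      · simp
      · simp
    exact h3
  obtain ⟨u, hu⟩ := hdvd
  have hLu : ¬ IsUnit L := by
    intro hU
    have h5 := hU.map (evR A0 A1 0)
    have h6 : evR A0 A1 0 L = 0 := by
      simp [evR, hL]
    rw [h6] at h5
    exact not_isUnit_zero h5
  have hU : IsUnit u := (hQ.isUnit_or_isUnit hu).resolve_left hLu
  rw [hu, map_mul] at hx
  have h7 : evR g0 g1 x L = 0 :=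
    (mul_eq_zero.mp hx).resolve_right (hU.map (evR g0 g1 x)).ne_zero
  have h8 : evR g0 g1 x L = Polynomial.C (g0 - (A0 + A2 * x)) +
      Polynomial.C (g1 - (A1 + A3 * x)) * Polynomial.X := by
    simp [evR, hL]
    ring
  rw [h8] at h7
  have c0 := congrArg (fun f => Polynomial.coeff f 0) h7
  have c1 := congrArg (fun f => Polynomial.coeff f 1) h7
  simp [Polynomial.coeff_C] at c0 c1
  exact ⟨sub_eq_zero.mp c0, sub_eq_zero.mp c1⟩

lemma evL_eval {K : Type*} [Field K] (f0 f1 y x : K) (Q : MvPolynomial (Fin 3) K) :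
    (evL f0 f1 y Q).eval x = eval ![f0 + f1 * x, y, x] Q := by
  induction Q using MvPolynomial.induction_on with
  | C a => simp [evL]
  | add p q hp hq => simp only [map_add, Polynomial.eval_add, hp, hq]
  | mul_X p j hp =>
    rw [map_mul, Polynomial.eval_mul, hp, map_mul, eval_X]
    congr 1
    fin_cases j <;> simp [evL]

lemma evR_eval {K : Type*} [Field K] (f0 f1 y x : K) (Q : MvPolynomial (Fin 3) K) :
    (evR f0 f1 x Q).eval y = eval ![f0 + f1 * y, y, x] Q := by
  induction Q using MvPolynomial.induction_on with
  | C a => simp [evR]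
  | add p q hp hq => simp only [map_add, Polynomial.eval_add, hp, hq]
  | mul_X p j hp =>
    rw [map_mul, Polynomial.eval_mul, hp, map_mul, eval_X]
    congr 1
    fin_cases j <;> simp [evR]

lemma evL_deg {K : Type*} [Field K] (f0 f1 y : K) (Q : MvPolynomial (Fin 3) K) :
    (evL f0 f1 y Q).natDegree ≤ Q.totalDegree := by
  have := MvPolynomial.aeval_natDegree_le (m := Q.totalDegree) (n := 1) Q le_rfl
    ![Polynomial.C f0 + Polynomial.C f1 * Polynomial.X, Polynomial.C y, Polynomial.X] (by
      intro i
      fin_cases i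
      · simp only [Fin.zero_eta, Matrix.cons_val_zero]
        rw [add_comm]
        exact Polynomial.natDegree_linear_le
      · simp
      · simp)
  simpa [evL] using this

lemma evR_deg {K : Type*} [Field K] (f0 f1 y : K) (Q : MvPolynomial (Fin 3) K) :
    (evR f0 f1 y Q).natDegree ≤ Q.totalDegree := by
  have := MvPolynomial.aeval_natDegree_le (m := Q.totalDegree) (n := 1) Q le_rfl
    ![Polynomial.C f0 + Polynomial.C f1 * Polynomial.X, Polynomial.X, Polynomial.C y] (by
      intro i
      fin_cases i
      · simp only [Fin.zero_eta, Matrix.cons_val_zero]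
        rw [add_comm]
        exact Polynomial.natDegree_linear_le
      · simp
      · simp)
  simpa [evR] using this

lemma poly_zero_aux {K : Type*} [Field K] {ι : Type*} (W : Finset ι) (pos : ι → K)
    (hpos : Set.InjOn pos W) (f : Polynomial K) (h : ∀ j ∈ W, f.eval (pos j) = 0)
    (hc : f.natDegree < W.card) : f = 0 := by
  classical
  refine Polynomial.eq_zero_of_natDegree_lt_card_of_eval_eq_zero' f (W.image pos) ?_ ?_
  · intro x hx
    obtain ⟨j, hj, rfl⟩ := Finset.mem_image.mp hx
    exact h j hj
  · rw [Finset.card_image_of_injOn hpos]; exact hc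

lemma pigeon_aux {K : Type*} [Field K] {ι : Type*} (pos f0 f1 : ι → K) (M : ℕ)
    (P : MvPolynomial (Fin 3) K) (hP : P ≠ 0) :
    ∀ V : Finset ι, M * P.totalDegree < V.card → (∀ i ∈ V, evL (f0 i) (f1 i) (pos i) P = 0) →
    ∃ Q, Irreducible Q ∧ Q ∣ P ∧
      ∃ W ⊆ V, M * Q.totalDegree < W.card ∧ ∀ i ∈ W, evL (f0 i) (f1 i) (pos i) Q = 0 := by
  classical
  induction P using WfDvdMonoid.induction_on_irreducible with
  | zero => exact absurd rfl hP
  | unit u hu =>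
    intro V hV h
    obtain ⟨i, hi⟩ := Finset.card_pos.mp (lt_of_le_of_lt (Nat.zero_le _) hV)
    exact absurd (h i hi) (hu.map (evL (f0 i) (f1 i) (pos i))).ne_zero
  | mul a q ha hq ih =>
    intro V hV h
    rw [totalDegree_mul_of_isDomain hq.ne_zero ha, mul_add] at hV
    by_cases hc : M * q.totalDegree < (V.filter fun i => evL (f0 i) (f1 i) (pos i) q = 0).card
    · exact ⟨q, hq, dvd_mul_right _ _, _, Finset.filter_subset _ _, hc, fun i hi =>
        (Finset.mem_filter.mp hi).2⟩
    · have h1 := Finset.card_filter_add_card_filter_not (s := V)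
        (fun i => evL (f0 i) (f1 i) (pos i) q = 0)
      obtain ⟨Q, h2, h3, W, h4, h5, h6⟩ := ih ha
        (V.filter fun i => ¬ evL (f0 i) (f1 i) (pos i) q = 0) (by omega) (by
          intro i hi
          rw [Finset.mem_filter] at hi
          have := h i hi.1
          rw [map_mul] at this
          exact (mul_eq_zero.mp this).resolve_left hi.2)
      exact ⟨Q, h2, h3.mul_left _, W, h4.trans (Finset.filter_subset _ _), h5, h6⟩

lemma incid_min {K : Type*} [Field K] (p : ℕ) [CharP K p] {ι : Type*} [DecidableEq K]
    (V : Finset ι) (pos f0 f1 : ι → K) (hpos : Set.InjOn pos V) (k Δ : ℕ)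
    (hdeg : ∀ i ∈ V, Δ ≤ (V.filter fun j => f0 i + f1 i * pos j = f0 j + f1 j * pos i).card)
    (hk : ∀ A0 A1 A2 A3 : K,
      (V.filter fun j => f0 j = A0 + A2 * pos j ∧ f1 j = A1 + A3 * pos j).card ≤ k)
    (P : MvPolynomial (Fin 3) K) (hP : P ≠ 0)
    (hL : ∀ i ∈ V, evL (f0 i) (f1 i) (pos i) P = 0)
    (hR : ∀ i ∈ V, evR (f0 i) (f1 i) (pos i) P = 0)
    (hmin : ∀ R : MvPolynomial (Fin 3) K, R ≠ 0 → R.totalDegree < P.totalDegree →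
      (∀ i ∈ V, evL (f0 i) (f1 i) (pos i) R = 0) →
      (∀ i ∈ V, evR (f0 i) (f1 i) (pos i) R = 0) → False)
    (hp : 2 * P.totalDegree < p) (hn : 6 * P.totalDegree * P.totalDegree < V.card)
    (hΔ : 3 * P.totalDegree + k < Δ) : False := by
  classical
  set e := P.totalDegree with he
  -- curvature polynomials vanish on left lines
  have v2 : ∀ i ∈ V, evL (f0 i) (f1 i) (pos i) (FF 2 P) = 0 := fun i hi =>
    evL_FF _ _ _ _ (hL i hi)
  have v1 : ∀ i ∈ V, evL (f0 i) (f1 i) (pos i) (FF 1 P) = 0 := by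
    intro i hi
    refine poly_zero_aux _ pos (hpos.mono (Finset.coe_subset.mpr (Finset.filter_subset
      (fun j => f0 i + f1 i * pos j = f0 j + f1 j * pos i) V))) _ ?_ ?_
    · intro j hj
      rw [Finset.mem_filter] at hj
      have h1 := evR_FF _ _ _ _ (hR j hj.1)
      have h2 := evR_eval (f0 j) (f1 j) (pos i) (pos j) (FF 1 P)
      rw [h1, Polynomial.eval_zero] at h2
      rw [evL_eval, hj.2, ← h2]
    · have h1 := evL_deg (f0 i) (f1 i) (pos i) (FF 1 P)
      have h2 := FF_deg 1 P
      have h3 := hdeg i hi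
      omega
  obtain ⟨Q, hQ, hQP, W, hWV, hWc, hWQ⟩ := pigeon_aux pos f0 f1 (6 * e) P hP V hn hL
  have hposW : Set.InjOn pos W := hpos.mono (Finset.coe_subset.mpr hWV)
  obtain ⟨R, hR'⟩ := hQP
  have hR0 : R ≠ 0 := by
    rintro rfl
    exact hP (by rw [hR', mul_zero])
  have hdeg_eq : e = Q.totalDegree + R.totalDegree := by
    rw [he, hR', totalDegree_mul_of_isDomain hQ.ne_zero hR0]
  have hQ1 : 1 ≤ Q.totalDegree := by
    by_contra h0
    have h0 : Q.totalDegree = 0 := by omega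
    rw [totalDegree_eq_zero_iff_eq_C] at h0
    apply hQ.not_isUnit
    have h1 := hQ.ne_zero
    rw [h0] at h1 ⊢
    exact (IsUnit.mk0 _ (by rintro h2; apply h1; rw [h2, C_0])).map C
  have hS : (finSuccEquiv K 2 Q).natDegree ≠ 0 := by
    intro h0
    have h1 := sfree_aux W pos f0 f1 hposW Q hQ.ne_zero h0 hWQ
    have h2 : 1 * Q.totalDegree ≤ 6 * e * Q.totalDegree := Nat.mul_le_mul_right _ (by omega)
    omega
  have bez : ∀ F : MvPolynomial (Fin 3) K, F.totalDegree ≤ 3 * e →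
      (∀ i ∈ W, evL (f0 i) (f1 i) (pos i) F = 0) → Q ∣ F := by
    intro F hF hv
    refine bezout_aux W pos f0 f1 hposW Q F hQ hS hWQ hv (lt_of_le_of_lt ?_ hWc)
    calc 2 * Q.totalDegree * F.totalDegree ≤ 2 * Q.totalDegree * (3 * e) :=
          Nat.mul_le_mul_left _ hF
      _ = 6 * e * Q.totalDegree := by ring
  have hQp : Prime Q := hQ.prime
  have hQR : ¬ Q ∣ R := by
    rintro ⟨R', h1⟩
    refine hmin R hR0 (by omega) (fun i hi => ?_) (fun i hi => ?_)
    · have h2 := hL i hi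
      rw [hR', h1, map_mul, map_mul] at h2
      rw [h1, map_mul]
      rcases mul_eq_zero.mp h2 with h | h
      · rw [h, zero_mul]
      · exact h
    · have h2 := hR i hi
      rw [hR', h1, map_mul, map_mul] at h2
      rw [h1, map_mul]
      rcases mul_eq_zero.mp h2 with h | h
      · rw [h, zero_mul]
      · exact h
  have hFFQ : ∀ v, Q ∣ FF v P → Q ∣ FF v Q := by
    intro v hv
    have h1 := FF_mul v Q R
    rw [← hR'] at h1
    have h2 : Q ∣ R ^ 3 * FF v Q := by
      have := dvd_sub hv h1
      rwa [sub_sub_cancel] at this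
    exact (hQp.dvd_or_dvd h2).resolve_left fun h => hQR (hQp.dvd_of_dvd_pow h)
  have q1 : Q ∣ FF 1 Q := hFFQ 1 (bez _ (FF_deg 1 P) fun i hi => v1 i (hWV hi))
  have q2 : Q ∣ FF 2 Q := hFFQ 2 (bez _ (FF_deg 2 P) fun i hi => v2 i (hWV hi))
  have hPS : pderiv 0 P = pderiv 0 Q * R + Q * pderiv 0 R := by
    rw [hR', Derivation.leibniz, smul_eq_mul, smul_eq_mul]; ring
  have hQS : ¬ Q ∣ pderiv 0 P := by
    intro h
    rw [hPS] at h
    have h1 : Q ∣ pderiv 0 Q * R := (dvd_add_left (dvd_mul_right _ _)).mp h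
    have h2 := (hQp.dvd_or_dvd h1).resolve_right hQR
    have h3 : pderiv 0 Q ≠ 0 := fun h4 => hS (sfree_of_pderiv p Q (by omega) h4)
    obtain ⟨G, hG⟩ := h2
    have hG0 : G ≠ 0 := by rintro rfl; exact h3 (by rw [hG, mul_zero])
    have h5 := pderiv_deg 0 Q
    rw [hG, totalDegree_mul_of_isDomain hQ.ne_zero hG0] at h5
    omega
  have hPSd : (pderiv 0 P).totalDegree ≤ e := (pderiv_deg 0 P).trans (by omega)
  obtain ⟨i, hiW, hi⟩ : ∃ i ∈ W, evL (f0 i) (f1 i) (pos i) (pderiv 0 P) ≠ 0 := by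
    by_contra hcon
    push Not at hcon
    exact hQS (bez _ (by omega) hcon)
  have hiV := hWV hiW
  set N := V.filter fun j => f0 i + f1 i * pos j = f0 j + f1 j * pos i with hN
  set Z := N.filter fun j => (evL (f0 i) (f1 i) (pos i) (pderiv 0 P)).eval (pos j) = 0 with hZ
  set Y := N.filter fun j => ¬ (evL (f0 i) (f1 i) (pos i) (pderiv 0 P)).eval (pos j) = 0 with hY
  have hZY : Z.card + Y.card = N.card := Finset.card_filter_add_card_filter_not _
  have hNV : N ⊆ V := Finset.filter_subset _ _
  have hZc : Z.card ≤ e := by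
    by_contra hc
    apply hi
    refine poly_zero_aux Z pos (hpos.mono (Finset.coe_subset.mpr
      ((Finset.filter_subset _ _).trans hNV))) _ (fun j hj => (Finset.mem_filter.mp hj).2) ?_
    have := evL_deg (f0 i) (f1 i) (pos i) (pderiv 0 P)
    omega
  have hYc : k < Y.card := by
    have h1 : Δ ≤ N.card := hdeg i hiV
    omega
  have good : ∀ j ∈ Y, eval ![f0 i + f1 i * pos j, pos i, pos j] Q = 0 ∧
      eval ![f0 i + f1 i * pos j, pos i, pos j] (pderiv 0 Q) ≠ 0 ∧
      evR (f0 j) (f1 j) (pos j) Q = 0 := by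
    intro j hj
    rw [hY, Finset.mem_filter, hN, Finset.mem_filter, evL_eval] at hj
    obtain ⟨⟨hjV, hrel⟩, hne⟩ := hj
    have hQz : eval ![f0 i + f1 i * pos j, pos i, pos j] Q = 0 := by
      rw [← evL_eval, hWQ i hiW, Polynomial.eval_zero]
    rw [hPS, map_add, map_mul, map_mul, hQz, zero_mul, add_zero] at hne
    refine ⟨hQz, left_ne_zero_of_mul hne, ?_⟩
    have h1 := hR j hjV
    rw [hR', map_mul] at h1
    refine (mul_eq_zero.mp h1).resolve_right fun h2 => right_ne_zero_of_mul hne ?_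
    have h3 := evR_eval (f0 j) (f1 j) (pos i) (pos j) R
    rw [h2, Polynomial.eval_zero] at h3
    rw [hrel, ← h3]
  obtain ⟨j0, hj0⟩ := Finset.card_pos.mp (lt_of_le_of_lt (Nat.zero_le _) hYc)
  obtain ⟨A0, A1, A2, A3, hA⟩ := ode_main p Q q1 q2 _ (good j0 hj0).1 (good j0 hj0).2.1 (by omega)
  have hsub : Y ⊆ V.filter fun j => f0 j = A0 + A2 * pos j ∧ f1 j = A1 + A3 * pos j := by
    intro j hj
    refine Finset.mem_filter.mpr ⟨hNV (Finset.mem_filter.mp hj).1, ?_⟩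
    exact lin_factor Q hQ A0 A1 A2 A3 hA _ _ _ (good j hj).2.2
  have := (Finset.card_le_card hsub).trans (hk A0 A1 A2 A3)
  omega

lemma incid_main {K : Type*} [Field K] (p : ℕ) [CharP K p] {ι : Type*} [DecidableEq K]
    (V : Finset ι) (pos f0 f1 : ι → K) (hpos : Set.InjOn pos V) (k Δ d : ℕ)
    (hdeg : ∀ i ∈ V, Δ ≤ (V.filter fun j => f0 i + f1 i * pos j = f0 j + f1 j * pos i).card)
    (hk : ∀ A0 A1 A2 A3 : K,
      (V.filter fun j => f0 j = A0 + A2 * pos j ∧ f1 j = A1 + A3 * pos j).card ≤ k)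
    (hp : 2 * d < p) (hn : 6 * d * d < V.card) (hΔ : 3 * d + k < Δ) :
    ∀ P : MvPolynomial (Fin 3) K, P ≠ 0 → P.totalDegree ≤ d →
    (∀ i ∈ V, evL (f0 i) (f1 i) (pos i) P = 0) →
    (∀ i ∈ V, evR (f0 i) (f1 i) (pos i) P = 0) → False := by
  have key : ∀ e : ℕ, ∀ P : MvPolynomial (Fin 3) K, P.totalDegree = e → P ≠ 0 → e ≤ d →
    (∀ i ∈ V, evL (f0 i) (f1 i) (pos i) P = 0) →
    (∀ i ∈ V, evR (f0 i) (f1 i) (pos i) P = 0) → False := by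
    intro e
    induction e using Nat.strong_induction_on with
    | _ e ih =>
      intro P hPe hP hd hL hR
      refine incid_min p V pos f0 f1 hpos k Δ hdeg hk P hP hL hR ?_ (by omega) ?_ (by omega)
      · intro R hR0 hlt h1 h2
        exact ih _ (by omega) R rfl hR0 (by omega) h1 h2
      · refine lt_of_le_of_lt ?_ hn
        rw [hPe]
        gcongr
  intro P hP hd
  exact key _ P rfl hP hd

lemma weight_aux {ι : Type*} [DecidableEq ι] (V : Finset ι) (q : ℝ) (g : ι → ℝ) :
    ∑ S ∈ V.powerset, (q ^ S.card * (1 - q) ^ (V \ S).card) * ∏ j ∈ S, g j =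
      ∏ j ∈ V, (q * g j + (1 - q)) := by
  rw [Finset.prod_add]
  refine Finset.sum_congr rfl fun S _ => ?_
  rw [Finset.prod_mul_distrib, Finset.prod_const, Finset.prod_const]
  ring

lemma sampling {ι : Type*} [DecidableEq ι] (V : Finset ι) (N : ι → Finset ι)
    (hN : ∀ i ∈ V, N i ⊆ V) (q : ℝ) (hq0 : 0 ≤ q) (hq1 : q ≤ 1) (B D Δ : ℕ)
    (hΔ : ∀ i ∈ V, Δ ≤ (N i).card)
    (h : (1 + q) ^ V.card / 2 ^ (B + 1) + V.card * (2 ^ D * (1 - q / 2) ^ Δ) < 1) :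
    ∃ S ⊆ V, S.card ≤ B ∧ ∀ i ∈ V, D < (S ∩ N i).card := by
  by_contra hcon
  push Not at hcon
  set w : Finset ι → ℝ := fun S => q ^ S.card * (1 - q) ^ (V \ S).card with hw
  have hw0 : ∀ S, 0 ≤ w S := fun S =>
    mul_nonneg (pow_nonneg hq0 _) (pow_nonneg (by linarith) _)
  have w1 : ∑ S ∈ V.powerset, w S = 1 := by
    have := weight_aux V q (fun _ => 1)
    simpa [hw] using this
  have w2 : ∑ S ∈ V.powerset, w S * 2 ^ S.card = (1 + q) ^ V.card := by
    have := weight_aux V q (fun _ => 2)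
    rw [Finset.prod_const] at this
    simp only [Finset.prod_const] at this
    rw [hw, this]
    congr 1; ring
  have w3 : ∀ i ∈ V, ∑ S ∈ V.powerset, w S * (1 / 2) ^ (S ∩ N i).card ≤ (1 - q / 2) ^ Δ := by
    intro i hi
    have h1 := weight_aux V q (fun j => if j ∈ N i then 1 / 2 else 1)
    have h2 : ∏ j ∈ V, (q * (if j ∈ N i then (1 / 2 : ℝ) else 1) + (1 - q)) =
        (1 - q / 2) ^ (N i).card := by
      have h3 : ∀ j ∈ V, (q * (if j ∈ N i then (1 / 2 : ℝ) else 1) + (1 - q)) =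
          if j ∈ N i then (1 - q / 2) else 1 := by
        intro j _
        split_ifs <;> ring
      rw [Finset.prod_congr rfl h3, Finset.prod_ite_mem, Finset.prod_const,
        Finset.inter_eq_right.mpr (hN i hi)]
    have h4 : ∀ S : Finset ι, ∏ j ∈ S, (if j ∈ N i then (1 / 2 : ℝ) else 1) =
        (1 / 2) ^ (S ∩ N i).card := by
      intro S
      rw [Finset.prod_ite_mem, Finset.prod_const]
    simp only [h4] at h1
    rw [hw, h1, h2]
    exact pow_le_pow_of_le_one (by linarith) (by linarith) (hΔ i hi)
  have key : ∀ S ∈ V.powerset, w S ≤ w S * 2 ^ S.card / 2 ^ (B + 1) +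
      ∑ i ∈ V, 2 ^ D * (w S * (1 / 2) ^ (S ∩ N i).card) := by
    intro S hS
    rw [Finset.mem_powerset] at hS
    have hnn : ∀ i ∈ V, (0:ℝ) ≤ 2 ^ D * (w S * (1 / 2) ^ (S ∩ N i).card) := fun i _ =>
      mul_nonneg (by positivity) (mul_nonneg (hw0 S) (by positivity))
    by_cases hB : S.card ≤ B
    · obtain ⟨i, hi, hlt⟩ := hcon S hS hB
      have h1 := Finset.single_le_sum hnn hi
      have h2 : w S ≤ 2 ^ D * (w S * (1 / 2) ^ (S ∩ N i).card) := by
        have h3 : (1:ℝ) ≤ 2 ^ D * (1 / 2) ^ (S ∩ N i).card := by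
          have h4 : ((1:ℝ) / 2) ^ D ≤ (1 / 2) ^ (S ∩ N i).card :=
            pow_le_pow_of_le_one (by norm_num) (by norm_num) hlt
          calc (1:ℝ) = 2 ^ D * (1 / 2) ^ D := by rw [← mul_pow]; norm_num
            _ ≤ _ := by gcongr
        nlinarith [hw0 S]
      have h5 : 0 ≤ w S * 2 ^ S.card / 2 ^ (B + 1) :=
        div_nonneg (mul_nonneg (hw0 S) (by positivity)) (by positivity)
      linarith
    · have h1 := Finset.sum_nonneg hnn
      have h2 : w S ≤ w S * 2 ^ S.card / 2 ^ (B + 1) := by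
        rw [le_div_iff₀ (by positivity)]
        exact mul_le_mul_of_nonneg_left (pow_le_pow_right₀ (by norm_num) (by omega)) (hw0 S)
      linarith
  have tot := Finset.sum_le_sum key
  rw [w1, Finset.sum_add_distrib, ← Finset.sum_div, w2, Finset.sum_comm] at tot
  have tot2 : ∑ i ∈ V, ∑ S ∈ V.powerset, 2 ^ D * (w S * (1 / 2) ^ (S ∩ N i).card) ≤
      ∑ i ∈ V, (2:ℝ) ^ D * (1 - q / 2) ^ Δ := by
    refine Finset.sum_le_sum fun i hi => ?_
    rw [← Finset.mul_sum]
    exact mul_le_mul_of_nonneg_left (w3 i hi) (by positivity)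
  rw [Finset.sum_const, nsmul_eq_mul] at tot2
  linarith

/-- polynomial from coefficients in a box -/
noncomputable def boxPoly (K : Type*) [Field K] (m : ℕ) :
    ((Fin 3 → Fin m) → K) →ₗ[K] MvPolynomial (Fin 3) K :=
  ∑ v : Fin 3 → Fin m, (MvPolynomial.monomial (Finsupp.equivFunOnFinite.symm
    (fun i => (v i : ℕ)))).comp (LinearMap.proj v)

lemma boxPoly_apply {K : Type*} [Field K] (m : ℕ) (c : (Fin 3 → Fin m) → K) :
    boxPoly K m c = ∑ v : Fin 3 → Fin m, MvPolynomial.monomial (Finsupp.equivFunOnFinite.symm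
      (fun i => (v i : ℕ))) (c v) := by
  simp [boxPoly]

lemma boxPoly_ne {K : Type*} [Field K] (m : ℕ) (c : (Fin 3 → Fin m) → K) (hc : c ≠ 0) :
    boxPoly K m c ≠ 0 := by
  classical
  intro h
  apply hc
  funext v
  have h1 := congrArg (coeff (Finsupp.equivFunOnFinite.symm (fun i => (v i : ℕ)))) h
  rw [boxPoly_apply, coeff_sum, Finset.sum_eq_single v] at h1
  · simpa using h1
  · intro u _ huv
    rw [coeff_monomial, if_neg]
    intro h2
    apply huv
    have h3 := Finsupp.equivFunOnFinite.symm.injective h2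
    funext i
    exact Fin.ext (congrFun h3 i)
  · simp

lemma boxPoly_deg {K : Type*} [Field K] (m : ℕ) (c : (Fin 3 → Fin m) → K) :
    (boxPoly K m c).totalDegree ≤ 3 * m := by
  rw [boxPoly_apply]
  refine (totalDegree_finsetSum _ _).trans (Finset.sup_le fun v _ => ?_)
  refine (totalDegree_monomial_le _ _).trans ?_
  rw [Finsupp.sum_fintype _ _ (by simp)]
  simp only [Fin.sum_univ_three]
  have h0 := (v 0).2
  have h1 := (v 1).2
  have h2 := (v 2).2
  simp
  omega

lemma exists_poly {K : Type*} [Field K] {ι : Type*} (S : Finset ι) (pos f0 f1 : ι → K) (m : ℕ)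
    (hm : 2 * S.card * (3 * m + 1) < m ^ 3) :
    ∃ P : MvPolynomial (Fin 3) K, P ≠ 0 ∧ P.totalDegree ≤ 3 * m ∧
      (∀ i ∈ S, evL (f0 i) (f1 i) (pos i) P = 0) ∧
      (∀ i ∈ S, evR (f0 i) (f1 i) (pos i) P = 0) := by
  classical
  let Φ : ((Fin 3 → Fin m) → K) →ₗ[K] ((S × Fin (3 * m + 1)) ⊕ (S × Fin (3 * m + 1)) → K) :=
    LinearMap.pi fun x => match x with
      | Sum.inl (i, t) => (Polynomial.lcoeff K t).comp
          ((evL (f0 i) (f1 i) (pos i)).toLinearMap.comp (boxPoly K m))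
      | Sum.inr (i, t) => (Polynomial.lcoeff K t).comp
          ((evR (f0 i) (f1 i) (pos i)).toLinearMap.comp (boxPoly K m))
  have hker : LinearMap.ker Φ ≠ ⊥ := by
    apply LinearMap.ker_ne_bot_of_finrank_lt
    rw [Module.finrank_pi, Module.finrank_pi]
    simp only [Fintype.card_sum, Fintype.card_prod, Fintype.card_coe, Fintype.card_fin,
      Fintype.card_pi, Finset.prod_const, Finset.card_univ]
    linarith
  obtain ⟨c, hc, hc0⟩ := Submodule.exists_mem_ne_zero_of_ne_bot hker
  have hΦ : Φ c = 0 := hc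
  refine ⟨boxPoly K m c, boxPoly_ne m c hc0, boxPoly_deg m c, fun i hi => ?_, fun i hi => ?_⟩
  · ext t
    by_cases ht : t < 3 * m + 1
    · have := congrFun hΦ (Sum.inl (⟨i, hi⟩, ⟨t, ht⟩))
      simpa [Φ] using this
    · rw [Polynomial.coeff_zero]
      apply Polynomial.coeff_eq_zero_of_natDegree_lt
      have h1 := evL_deg (f0 i) (f1 i) (pos i) (boxPoly K m c)
      have h2 := boxPoly_deg m c
      omega
  · ext t
    by_cases ht : t < 3 * m + 1
    · have := congrFun hΦ (Sum.inr (⟨i, hi⟩, ⟨t, ht⟩))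
      simpa [Φ] using this
    · rw [Polynomial.coeff_zero]
      apply Polynomial.coeff_eq_zero_of_natDegree_lt
      have h1 := evR_deg (f0 i) (f1 i) (pos i) (boxPoly K m c)
      have h2 := boxPoly_deg m c
      omega

lemma num_aux (n r Δ : ℕ) (hr : 1 ≤ r) (hn : n ≤ 200000 * r ^ 2) (hΔ : 100000000 * r ≤ Δ) :
    (1 + (1 / 200000 : ℝ)) ^ n / 2 ^ (100 * r ^ 2 + 1) +
      n * (2 ^ (90 * r) * (1 - (1 / 200000 : ℝ) / 2) ^ Δ) < 1 := by
  have hn' : (n : ℝ) ≤ 200000 * (r : ℝ) ^ 2 := by exact_mod_cast hn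
  have hΔ' : 100000000 * (r : ℝ) ≤ Δ := by exact_mod_cast hΔ
  have a1 : (1 + (1 / 200000 : ℝ)) ^ n ≤ 4 ^ (r ^ 2) := by
    have h1 : (1 + (1 / 200000 : ℝ)) ≤ Real.exp (1 / 200000) := by
      have := Real.add_one_le_exp (1 / 200000 : ℝ); linarith
    calc (1 + (1 / 200000 : ℝ)) ^ n ≤ (Real.exp (1 / 200000)) ^ n := by gcongr
      _ = Real.exp (n * (1 / 200000)) := (Real.exp_nat_mul _ _).symm
      _ ≤ Real.exp (((r ^ 2 : ℕ) : ℝ) * 1) := by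
          apply Real.exp_le_exp.mpr
          push_cast
          linarith
      _ = (Real.exp 1) ^ (r ^ 2) := Real.exp_nat_mul _ _
      _ ≤ 4 ^ (r ^ 2) := by
          have := Real.exp_one_lt_d9
          gcongr
          linarith
  have b1 : (1 + (1 / 200000 : ℝ)) ^ n / 2 ^ (100 * r ^ 2 + 1) < 1 / 2 := by
    rw [div_lt_iff₀ (by positivity)]
    refine lt_of_le_of_lt a1 ?_
    have : (1 / 2 : ℝ) * 2 ^ (100 * r ^ 2 + 1) = 2 ^ (100 * r ^ 2) := by
      rw [pow_succ]; ring
    rw [this]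
    have h4 : (4 : ℝ) ^ (r ^ 2) = 2 ^ (2 * r ^ 2) := by
      rw [pow_mul]; norm_num
    rw [h4]
    apply pow_lt_pow_right₀ (by norm_num)
    have : 0 < r ^ 2 := by positivity
    omega
  have a2 : (1 - (1 / 200000 : ℝ) / 2) ^ Δ ≤ (1 / 2) ^ (120 * r) := by
    have h1 : (1 - (1 / 200000 : ℝ) / 2) ≤ Real.exp (-(1 / 400000)) := by
      have := Real.add_one_le_exp (-(1 / 400000) : ℝ); linarith
    calc (1 - (1 / 200000 : ℝ) / 2) ^ Δ ≤ (Real.exp (-(1 / 400000))) ^ Δ := by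
          apply pow_le_pow_left₀ _ h1
          norm_num
      _ = Real.exp (Δ * (-(1 / 400000))) := (Real.exp_nat_mul _ _).symm
      _ ≤ Real.exp (((120 * r : ℕ) : ℝ) * (-1)) := by
          apply Real.exp_le_exp.mpr
          push_cast
          linarith
      _ = (Real.exp (-1)) ^ (120 * r) := Real.exp_nat_mul _ _
      _ ≤ (1 / 2) ^ (120 * r) := by
          have h2 : (2 : ℝ) ≤ Real.exp 1 := by
            have := Real.exp_one_gt_d9; linarith
          have h3 : Real.exp (-1) ≤ 1 / 2 := by
            rw [Real.exp_neg, one_div]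
            exact inv_anti₀ (by norm_num) h2
          gcongr
  have b2 : n * (2 ^ (90 * r) * (1 - (1 / 200000 : ℝ) / 2) ^ Δ) < 1 / 2 := by
    have h1 : (r : ℝ) < 2 ^ r := by exact_mod_cast Nat.lt_two_pow_self
    have h0 : (1 : ℝ) ≤ r := by exact_mod_cast hr
    have h2 : (r : ℝ) ^ 2 ≤ 2 ^ (2 * r) := by
      rw [mul_comm, pow_mul]; gcongr
    have h3 : (2 : ℝ) ^ 19 ≤ 2 ^ (19 * r) := pow_le_pow_right₀ (by norm_num) (by omega)
    have h4 : (n : ℝ) * 2 < 2 ^ (21 * r) := by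
      calc (n : ℝ) * 2 ≤ 400000 * (r : ℝ) ^ 2 := by linarith
        _ < 2 ^ 19 * (r : ℝ) ^ 2 := by
            have : (0:ℝ) < (r:ℝ) ^ 2 := by positivity
            nlinarith
        _ ≤ 2 ^ (19 * r) * 2 ^ (2 * r) := by gcongr
        _ = 2 ^ (21 * r) := by rw [← pow_add]; congr 1; ring
    have h5 : (2 : ℝ) ^ (90 * r) * (1 - (1 / 200000 : ℝ) / 2) ^ Δ ≤ (1 / 2) ^ (21 * r) := by
      calc (2 : ℝ) ^ (90 * r) * (1 - (1 / 200000 : ℝ) / 2) ^ Δ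
          ≤ 2 ^ (90 * r) * (1 / 2) ^ (120 * r) := by gcongr
        _ = (1 / 2) ^ (30 * r) := by
            have : 120 * r = 90 * r + 30 * r := by ring
            rw [this, pow_add, ← mul_assoc, ← mul_pow]
            norm_num
        _ ≤ (1 / 2) ^ (21 * r) := pow_le_pow_of_le_one (by norm_num) (by norm_num) (by omega)
    have h6 : (n : ℝ) * (2 ^ (90 * r) * (1 - (1 / 200000 : ℝ) / 2) ^ Δ) ≤
        n * (1 / 2) ^ (21 * r) := by gcongr
    have h7 : (n : ℝ) * (1 / 2) ^ (21 * r) < 1 / 2 := by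
      have h8 : (2:ℝ) ^ (21 * r) * (1 / 2) ^ (21 * r) = 1 := by rw [← mul_pow]; norm_num
      have h9 : (0:ℝ) < (1 / 2) ^ (21 * r) := by positivity
      nlinarith
    linarith
  linarith

lemma incid_V {K : Type*} [Field K] (p : ℕ) [CharP K p] {ι : Type*} [DecidableEq K]
    (V : Finset ι) (pos f0 f1 : ι → K) (hpos : Set.InjOn pos V) (k Δ r : ℕ)
    (hdeg : ∀ i ∈ V, Δ ≤ (V.filter fun j => f0 i + f1 i * pos j = f0 j + f1 j * pos i).card)
    (hk : ∀ A0 A1 A2 A3 : K,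
      (V.filter fun j => f0 j = A0 + A2 * pos j ∧ f1 j = A1 + A3 * pos j).card ≤ k)
    (hr : 1 ≤ r) (hn : 50000 * r ^ 2 ≤ V.card) (hn' : V.card ≤ 200000 * r ^ 2)
    (hp : 180 * r < p) (hΔ : 100000000 * r + k ≤ Δ) : False := by
  classical
  obtain ⟨S, hSV, hSc, hS⟩ := sampling V
    (fun i => V.filter fun j => f0 i + f1 i * pos j = f0 j + f1 j * pos i)
    (fun i _ => Finset.filter_subset _ _) (1 / 200000) (by norm_num) (by norm_num)
    (100 * r ^ 2) (90 * r) Δ hdeg (num_aux _ r Δ hr hn' (by omega))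
  have hr2 : 1 ≤ r ^ 2 := Nat.one_le_pow _ _ hr
  obtain ⟨P, hP, hPd, hPL, hPR⟩ := exists_poly S pos f0 f1 (30 * r) (by
    calc 2 * S.card * (3 * (30 * r) + 1) ≤ 2 * (100 * r ^ 2) * (3 * (30 * r) + r) := by gcongr
      _ = 18200 * r ^ 3 := by ring
      _ < 27000 * r ^ 3 := by
        have : 0 < r ^ 3 := by positivity
        omega
      _ = (30 * r) ^ 3 := by ring)
  refine incid_main p V pos f0 f1 hpos k Δ (90 * r) hdeg hk (by omega) ?_ (by omega) P hP
    (by omega) ?_ ?_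
  · calc 6 * (90 * r) * (90 * r) = 48600 * r ^ 2 := by ring
      _ < 50000 * r ^ 2 := by omega
      _ ≤ _ := hn
  · intro i hi
    refine poly_zero_aux _ pos (hpos.mono (Finset.coe_subset.mpr
      (Finset.inter_subset_left.trans hSV))) _ ?_
      (lt_of_le_of_lt ((evL_deg _ _ _ _).trans (hPd.trans (by omega))) (hS i hi))
    intro j hj
    obtain ⟨hjS, hj⟩ := Finset.mem_inter.mp hj
    rw [Finset.mem_filter] at hj
    have h2 := evR_eval (f0 j) (f1 j) (pos i) (pos j) P
    rw [hPR j hjS, Polynomial.eval_zero] at h2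
    rw [evL_eval, hj.2, ← h2]
  · intro i hi
    refine poly_zero_aux _ pos (hpos.mono (Finset.coe_subset.mpr
      (Finset.inter_subset_left.trans hSV))) _ ?_
      (lt_of_le_of_lt ((evR_deg _ _ _ _).trans (hPd.trans (by omega))) (hS i hi))
    intro j hj
    obtain ⟨hjS, hj⟩ := Finset.mem_inter.mp hj
    rw [Finset.mem_filter] at hj
    have h2 := evL_eval (f0 j) (f1 j) (pos j) (pos i) P
    rw [hPL j hjS, Polynomial.eval_zero] at h2
    rw [evR_eval, hj.2, ← h2]

lemma prune {ι : Type*} [DecidableEq ι] (R : ι → ι → Prop) [∀ i j, Decidable (R i j)]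
    (hsymm : ∀ i j, R i j → R j i) (Δ : ℕ) : ∀ n : ℕ, ∀ Ω : Finset ι, Ω.card = n →
    2 * Δ * n < ∑ i ∈ Ω, (Ω.filter fun j => R i j).card →
    ∃ V ⊆ Ω, V.Nonempty ∧ ∀ i ∈ V, Δ < (V.filter fun j => R i j).card := by
  intro n
  induction n with
  | zero =>
    intro Ω h0 h
    rw [Finset.card_eq_zero] at h0
    subst h0
    simp at h
  | succ n ih =>
    intro Ω hn h
    by_cases hall : ∀ i ∈ Ω, Δ < (Ω.filter fun j => R i j).card
    · exact ⟨Ω, subset_rfl, Finset.card_pos.mp (by omega), hall⟩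
    · push Not at hall
      obtain ⟨v, hv, hvd⟩ := hall
      obtain ⟨V, h1, h2, h3⟩ := ih (Ω.erase v) (by rw [Finset.card_erase_of_mem hv]; omega) (by
        have e1 := Finset.add_sum_erase Ω (fun i => (Ω.filter fun j => R i j).card) hv
        have e2 : ∑ i ∈ Ω.erase v, (Ω.filter fun j => R i j).card ≤
            ∑ i ∈ Ω.erase v, (((Ω.erase v).filter fun j => R i j).card + if R v i then 1 else 0) := by
          refine Finset.sum_le_sum fun i _ => ?_
          rw [Finset.filter_erase]
          split_ifs with hvi
          · have := Finset.pred_card_le_card_erase (s := Ω.filter fun j => R i j) (a := v)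
            omega
          · rw [Finset.erase_eq_of_notMem]
            · omega
            · intro hm
              exact hvi (hsymm _ _ (Finset.mem_filter.mp hm).2)
        have e3 : ∑ i ∈ Ω.erase v, (if R v i then 1 else 0) ≤ (Ω.filter fun j => R v j).card := by
          rw [Finset.card_filter]
          exact Finset.sum_le_sum_of_subset (Finset.erase_subset _ _)
        rw [Finset.sum_add_distrib] at e2
        have e4 : 2 * Δ * (n + 1) = 2 * Δ * n + 2 * Δ := by ring
        omega)
      exact ⟨V, h1.trans (Finset.erase_subset _ _), h2, h3⟩

lemma incid_bound {K : Type*} [Field K] (p : ℕ) [CharP K p] {ι : Type*} [DecidableEq K]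
    (Ω : Finset ι) (pos f0 f1 : ι → K) (hpos : Set.InjOn pos Ω) (k : ℕ)
    (hk : ∀ A0 A1 A2 A3 : K,
      (Ω.filter fun j => f0 j = A0 + A2 * pos j ∧ f1 j = A1 + A3 * pos j).card ≤ k)
    (hΩ : Ω.card ≤ p ^ 2) :
    ∑ i ∈ Ω, (Ω.filter fun j => f0 i + f1 i * pos j = f0 j + f1 j * pos i).card ≤
      2 * (100000000 * (Nat.sqrt Ω.card + 1) + k) * Ω.card := by
  classical
  by_contra hcon
  push Not at hcon
  obtain ⟨V, hVΩ, ⟨v, hv⟩, hV⟩ := prune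
    (fun i j => f0 i + f1 i * pos j = f0 j + f1 j * pos i) (fun i j h => h.symm) _ _ Ω rfl hcon
  set n := V.card with hn
  set N := Ω.card with hN
  have hnN : n ≤ N := Finset.card_le_card hVΩ
  have hbig : 100000000 * (Nat.sqrt N + 1) < n := by
    have h1 := hV v hv
    have h2 := Finset.card_filter_le V (fun j => f0 v + f1 v * pos j = f0 j + f1 j * pos v)
    omega
  set r := Nat.sqrt (n / 50000) with hr
  have r1 : r * r ≤ n / 50000 := Nat.sqrt_le _
  have r2 : n / 50000 < (r + 1) * (r + 1) := Nat.lt_succ_sqrt _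
  have r3 : 1 ≤ r := by
    by_contra h0
    have h0 : r = 0 := by omega
    rw [h0] at r2
    omega
  have r4 : r ≤ Nat.sqrt N := Nat.sqrt_le_sqrt (by omega)
  have r5 : 50000 * r ^ 2 ≤ n := by
    rw [pow_two]; omega
  have r6 : n ≤ 200000 * r ^ 2 := by
    have : (r + 1) * (r + 1) ≤ (2 * r) * (2 * r) := Nat.mul_le_mul (by omega) (by omega)
    have e : (2 * r) * (2 * r) = 4 * r ^ 2 := by ring
    omega
  refine incid_V p V pos f0 f1 (hpos.mono (Finset.coe_subset.mpr hVΩ)) k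
    (100000000 * (Nat.sqrt N + 1) + k) r (fun i hi => (hV i hi).le) ?_ r3 r5 r6 ?_ (by omega)
  · intro A0 A1 A2 A3
    exact (Finset.card_le_card (Finset.filter_subset_filter _ hVΩ)).trans (hk A0 A1 A2 A3)
  · have h1 : 50000 * r ^ 2 ≤ p ^ 2 := by omega
    by_contra h2
    have h3 : p ^ 2 ≤ (180 * r) ^ 2 := Nat.pow_le_pow_left (by omega) 2
    have h4 : (180 * r) ^ 2 = 32400 * r ^ 2 := by ring
    have h5 : 0 < r ^ 2 := by positivity
    omega

lemma frac_aux1 {F : Type*} [Field F] (c m d g g' : F) (hg : g ≠ 0) (hg' : g' ≠ 0) :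
    c / g + m / g * (d / g') = (c * g' + m * d) / (g * g') := by
  field_simp

lemma frac_aux2 {F : Type*} [Field F] (c a b d g : F) (hg : g ≠ 0)
    (h : c / g = a + b * (d / g)) : c = a * g + b * d := by
  field_simp at h
  linear_combination h

lemma coef_aux {F : Type*} [Field F] (x m c x' m' c' : F)
    (h : (Polynomial.C x + Polynomial.X * Polynomial.C c + Polynomial.X ^ 3 * Polynomial.C m) *
        (1 + Polynomial.X * Polynomial.C m') =
      (Polynomial.C x' + Polynomial.X * Polynomial.C c' + Polynomial.X ^ 3 * Polynomial.C m') *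
        (1 + Polynomial.X * Polynomial.C m)) : x = x' ∧ m = m' ∧ c = c' := by
  have e : ∀ x m c m' : F,
      (Polynomial.C x + Polynomial.X * Polynomial.C c + Polynomial.X ^ 3 * Polynomial.C m) *
        (1 + Polynomial.X * Polynomial.C m') =
      Polynomial.C x + Polynomial.C (c + x * m') * Polynomial.X ^ 1
        + Polynomial.C (c * m') * Polynomial.X ^ 2 + Polynomial.C m * Polynomial.X ^ 3
        + Polynomial.C (m * m') * Polynomial.X ^ 4 := by
    intro x m c m'
    simp only [Polynomial.C_add, Polynomial.C_mul]
    ring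
  rw [e, e] at h
  have c0 := congrArg (fun f => Polynomial.coeff f 0) h
  have c1 := congrArg (fun f => Polynomial.coeff f 1) h
  have c3 := congrArg (fun f => Polynomial.coeff f 3) h
  simp [Polynomial.coeff_C, Polynomial.coeff_X_pow, -map_mul, -map_add,
    Polynomial.coeff_C_mul, Polynomial.coeff_X] at c0 c1 c3
  refine ⟨c0, c3, ?_⟩
  rw [c0, c3] at c1
  exact add_right_cancel c1

lemma config_bound (p : ℕ) [Fact p.Prime] (Ω : Finset (ZMod p × ZMod p × ZMod p)) (k : ℕ)
    (hk : ∀ Z ⊆ Ω, (∀ u ∈ Z, ∀ v ∈ Z, ∀ w ∈ Z,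
      (v.1 - u.1) * (w.2.1 - u.2.1) = (w.1 - u.1) * (v.2.1 - u.2.1) ∧
      (v.1 - u.1) * (w.2.2 - u.2.2) = (w.1 - u.1) * (v.2.2 - u.2.2) ∧
      (v.2.1 - u.2.1) * (w.2.2 - u.2.2) = (w.2.1 - u.2.1) * (v.2.2 - u.2.2)) → Z.card ≤ k)
    (hΩ : Ω.card ≤ p ^ 2) :
    ∑ i ∈ Ω, (Ω.filter fun j => i.2.2 + i.2.1 * j.1 = j.2.2 + j.2.1 * i.1).card ≤
      2 * (100000000 * (Nat.sqrt Ω.card + 1) + k) * Ω.card := by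
  classical
  set K := FractionRing (Polynomial (ZMod p)) with hK
  let φ : Polynomial (ZMod p) →+* K := algebraMap _ _
  have hφ : Function.Injective φ := IsFractionRing.injective _ _
  let ψ : ZMod p →+* K := φ.comp Polynomial.C
  have hψ : Function.Injective ψ := hφ.comp Polynomial.C_injective
  have : CharP K p := charP_of_injective_ringHom hψ p
  set s : K := φ Polynomial.X with hs
  let γ : ZMod p × ZMod p × ZMod p → K := fun i => 1 + s * ψ i.2.1
  let δ : ZMod p × ZMod p × ZMod p → K := fun i => ψ i.1 + s * ψ i.2.2 + s ^ 3 * ψ i.2.1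
  have hγ : ∀ i, γ i ≠ 0 := by
    intro i h
    have h1 : φ (1 + Polynomial.X * Polynomial.C i.2.1) = 0 := by
      rw [← h]; simp only [γ, hs, ψ, map_add, map_mul, map_one, RingHom.comp_apply]
    have h2 := (map_eq_zero_iff φ hφ).mp h1
    have h3 := congrArg (fun f => Polynomial.coeff f 0) h2
    simp at h3
  have hrel : ∀ i j, (ψ i.2.2 / γ i + ψ i.2.1 / γ i * (δ j / γ j) =
      ψ j.2.2 / γ j + ψ j.2.1 / γ j * (δ i / γ i)) ↔
      i.2.2 + i.2.1 * j.1 = j.2.2 + j.2.1 * i.1 := by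
    intro i j
    rw [← hψ.eq_iff]
    have e1 : ψ i.2.2 / γ i + ψ i.2.1 / γ i * (δ j / γ j) =
        (ψ i.2.2 * γ j + ψ i.2.1 * δ j) / (γ i * γ j) := by
      exact frac_aux1 _ _ _ _ _ (hγ i) (hγ j)
    have e2 : ψ j.2.2 / γ j + ψ j.2.1 / γ j * (δ i / γ i) =
        (ψ j.2.2 * γ i + ψ j.2.1 * δ i) / (γ i * γ j) := by
      rw [mul_comm (γ i)]
      exact frac_aux1 _ _ _ _ _ (hγ j) (hγ i)
    rw [e1, e2, div_left_inj' (mul_ne_zero (hγ i) (hγ j))]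
    simp only [map_add, map_mul, γ, δ]
    constructor
    · intro h; linear_combination h
    · intro h; linear_combination h
  have main := incid_bound p Ω (fun i => δ i / γ i) (fun i => ψ i.2.2 / γ i)
    (fun i => ψ i.2.1 / γ i) ?_ k ?_ hΩ
  · simpa only [hrel] using main
  · intro i _ j _ hij
    simp only at hij
    rw [div_eq_div_iff (hγ i) (hγ j)] at hij
    have h1 : φ ((Polynomial.C i.1 + Polynomial.X * Polynomial.C i.2.2 +
        Polynomial.X ^ 3 * Polynomial.C i.2.1) * (1 + Polynomial.X * Polynomial.C j.2.1)) =
        φ ((Polynomial.C j.1 + Polynomial.X * Polynomial.C j.2.2 +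
        Polynomial.X ^ 3 * Polynomial.C j.2.1) * (1 + Polynomial.X * Polynomial.C i.2.1)) := by
      simpa only [γ, δ, hs, ψ, map_add, map_mul, map_one, map_pow, RingHom.comp_apply] using hij
    obtain ⟨a, b, c⟩ := coef_aux _ _ _ _ _ _ (hφ h1)
    exact Prod.ext a (Prod.ext b c)
  · intro A0 A1 A2 A3
    refine hk _ (Finset.filter_subset _ _) ?_
    have hmem : ∀ u ∈ Ω.filter (fun j => ψ j.2.2 / γ j = A0 + A2 * (δ j / γ j) ∧
        ψ j.2.1 / γ j = A1 + A3 * (δ j / γ j)),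
        ψ u.2.2 = A0 * γ u + A2 * δ u ∧ ψ u.2.1 = A1 * γ u + A3 * δ u ∧
        1 = γ u - s * ψ u.2.1 ∧ ψ u.1 = δ u - s * ψ u.2.2 - s ^ 3 * ψ u.2.1 := by
      intro u hu
      obtain ⟨_, h1, h2⟩ := Finset.mem_filter.mp hu
      refine ⟨?_, ?_, ?_, ?_⟩
      · exact frac_aux2 _ _ _ _ _ (hγ u) h1
      · exact frac_aux2 _ _ _ _ _ (hγ u) h2
      · simp only [γ]; ring
      · simp only [δ]; ring
    have det : ∀ (a1 b1 a2 b2 a3 b3 g1 g2 g3 d1 d2 d3 l l' v v' : K),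
        1 = l * g1 + l' * d1 → 1 = l * g2 + l' * d2 → 1 = l * g3 + l' * d3 →
        ∀ t t' : K, a1 = t * g1 + t' * d1 → a2 = t * g2 + t' * d2 → a3 = t * g3 + t' * d3 →
        b1 = v * g1 + v' * d1 → b2 = v * g2 + v' * d2 → b3 = v * g3 + v' * d3 →
        (a2 - a1) * (b3 - b1) = (a3 - a1) * (b2 - b1) := by
      intro a1 b1 a2 b2 a3 b3 g1 g2 g3 d1 d2 d3 l l' v v' h1 h2 h3 t t' ha1 ha2 ha3 hb1 hb2 hb3
      have : (a2 * 1 * b3 - a2 * b1 * 1 - a1 * 1 * b3) - (a3 * 1 * b2 - a3 * b1 * 1 - a1 * 1 * b2)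
          = 0 := by
        have e : (a2 * 1 * b3 - a2 * b1 * 1 - a1 * 1 * b3) -
            (a3 * 1 * b2 - a3 * b1 * 1 - a1 * 1 * b2) =
            (a2 * (l * g1 + l' * d1) * b3 - a2 * b1 * (l * g3 + l' * d3)
              - a1 * (l * g2 + l' * d2) * b3) -
            (a3 * (l * g1 + l' * d1) * b2 - a3 * b1 * (l * g2 + l' * d2)
              - a1 * (l * g3 + l' * d3) * b2) := by
          rw [← h1, ← h2, ← h3]
        rw [e, ha1, ha2, ha3, hb1, hb2, hb3]
        ring
      linear_combination this
    intro u hu v hv w hw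
    obtain ⟨u1, u2, u3, u4⟩ := hmem u hu
    obtain ⟨v1, v2, v3, v4⟩ := hmem v hv
    obtain ⟨w1, w2, w3, w4⟩ := hmem w hw
    have lu : ∀ z, 1 = γ z - s * ψ z.2.1 → ψ z.2.1 = A1 * γ z + A3 * δ z →
        1 = (1 - s * A1) * γ z + (- s * A3) * δ z := by
      intro z h1 h2
      rw [h2] at h1
      linear_combination h1
    have lx : ∀ z, ψ z.1 = δ z - s * ψ z.2.2 - s ^ 3 * ψ z.2.1 →
        ψ z.2.2 = A0 * γ z + A2 * δ z → ψ z.2.1 = A1 * γ z + A3 * δ z →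
        ψ z.1 = (- s * A0 - s ^ 3 * A1) * γ z + (1 - s * A2 - s ^ 3 * A3) * δ z := by
      intro z h1 h2 h3
      rw [h2, h3] at h1
      linear_combination h1
    refine ⟨?_, ?_, ?_⟩ <;> apply hψ <;> simp only [map_mul, map_sub]
    · exact det _ _ _ _ _ _ (γ u) (γ v) (γ w) (δ u) (δ v) (δ w) _ _ _ _ (lu u u3 u2) (lu v v3 v2)
        (lu w w3 w2) _ _ (lx u u4 u1 u2) (lx v v4 v1 v2) (lx w w4 w1 w2) u2 v2 w2
    · exact det _ _ _ _ _ _ (γ u) (γ v) (γ w) (δ u) (δ v) (δ w) _ _ _ _ (lu u u3 u2) (lu v v3 v2)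
        (lu w w3 w2) _ _ (lx u u4 u1 u2) (lx v v4 v1 v2) (lx w w4 w1 w2) u1 v1 w1
    · exact det _ _ _ _ _ _ (γ u) (γ v) (γ w) (δ u) (δ v) (δ w) _ _ _ _ (lu u u3 u2) (lu v v3 v2)
        (lu w w3 w2) _ _ u2 v2 w2 u1 v1 w1

/-- number of points of `A × A` on the line `y = l.1 x + l.2` -/
def linc {p : ℕ} (A : Finset (ZMod p)) (l : ZMod p × ZMod p) : ℕ :=
  (A.filter fun x => l.1 * x + l.2 ∈ A).card

lemma linc_le {p : ℕ} (A : Finset (ZMod p)) (l : ZMod p × ZMod p) : linc A l ≤ A.card :=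
  Finset.card_filter_le _ _

lemma coll_card {p : ℕ} [Fact p.Prime] (A : Finset (ZMod p)) (L : Finset (ZMod p × ZMod p))
    (k : ℕ) (hk : 2 ≤ k) (hka : k ≤ A.card) (hL : ∀ l ∈ L, k ≤ linc A l)
    (Z : Finset (ZMod p × ZMod p × ZMod p)) (hZ : Z ⊆ A ×ˢ L)
    (hc : ∀ u ∈ Z, ∀ v ∈ Z, ∀ w ∈ Z,
      (v.1 - u.1) * (w.2.1 - u.2.1) = (w.1 - u.1) * (v.2.1 - u.2.1) ∧
      (v.1 - u.1) * (w.2.2 - u.2.2) = (w.1 - u.1) * (v.2.2 - u.2.2) ∧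
      (v.2.1 - u.2.1) * (w.2.2 - u.2.2) = (w.2.1 - u.2.1) * (v.2.2 - u.2.2)) :
    Z.card * k ≤ 2 * A.card ^ 2 := by
  classical
  by_cases hx : ∃ u ∈ Z, ∃ v ∈ Z, v.1 ≠ u.1
  · obtain ⟨u, hu, v, hv, huv⟩ := hx
    have hd : v.1 - u.1 ≠ 0 := sub_ne_zero.mpr huv
    have : Z.card ≤ A.card := by
      apply Finset.card_le_card_of_injOn (fun w => w.1)
      · intro w hw
        exact (Finset.mem_product.mp (hZ hw)).1
      · intro w hw w' hw' h
        simp only at h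
        obtain ⟨h1, h2, -⟩ := hc u hu v hv w hw
        obtain ⟨h1', h2', -⟩ := hc u hu v hv w' hw'
        rw [← h] at h1' h2'
        refine Prod.ext h (Prod.ext ?_ ?_)
        · have := mul_left_cancel₀ hd (h1.trans h1'.symm)
          exact sub_left_injective this
        · have := mul_left_cancel₀ hd (h2.trans h2'.symm)
          exact sub_left_injective this
    nlinarith
  · push Not at hx
    have key : ∃ X0 : ZMod p, ∀ w ∈ Z, ∀ w' ∈ Z, ∀ x, x ≠ X0 →
        w.2.1 * x + w.2.2 = w'.2.1 * x + w'.2.2 → w = w' := by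
      by_cases hm : ∃ u ∈ Z, ∃ v ∈ Z, v.2.1 ≠ u.2.1
      · obtain ⟨u, hu, v, hv, huv⟩ := hm
        have hd : v.2.1 - u.2.1 ≠ 0 := sub_ne_zero.mpr huv
        refine ⟨-((v.2.2 - u.2.2) / (v.2.1 - u.2.1)), ?_⟩
        intro w hw w' hw' x hxx h
        have h1 := (hc u hu v hv w hw).2.2
        have h2 := (hc u hu v hv w' hw').2.2
        have h3 : (w.2.1 - w'.2.1) * ((v.2.1 - u.2.1) * x + (v.2.2 - u.2.2)) = 0 := by
          linear_combination (v.2.1 - u.2.1) * h + h2 - h1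
        have h4 : (v.2.1 - u.2.1) * x + (v.2.2 - u.2.2) ≠ 0 := by
          intro h5
          apply hxx
          rw [← neg_div, eq_div_iff hd]
          linear_combination h5
        have h5 : w.2.1 = w'.2.1 := by
          rcases mul_eq_zero.mp h3 with h | h
          · exact sub_eq_zero.mp h
          · exact absurd h h4
        rw [h5] at h
        exact Prod.ext (hx _ hw' _ hw) (Prod.ext h5 (add_left_cancel h))
      · push Not at hm
        refine ⟨0, ?_⟩
        intro w hw w' hw' x _ h
        have h5 := hm _ hw' _ hw
        rw [h5] at h
        exact Prod.ext (hx _ hw' _ hw) (Prod.ext h5 (add_left_cancel h))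
    obtain ⟨X0, hX⟩ := key
    have h1 : ∑ w ∈ Z, ((A.filter fun x => w.2.1 * x + w.2.2 ∈ A).erase X0).card ≤
        (A ×ˢ A).card := by
      rw [← Finset.card_sigma]
      apply Finset.card_le_card_of_injOn
        (fun t : (Σ _ : ZMod p × ZMod p × ZMod p, ZMod p) =>
          (t.2, t.1.2.1 * t.2 + t.1.2.2))
      · rintro ⟨w, x⟩ ht
        simp at ht ⊢
        exact ht.2.1
      · rintro ⟨w, x⟩ ht ⟨w', x'⟩ ht' h
        simp at ht ht' h
        obtain ⟨rfl, h⟩ := h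
        have := hX w ht.1 w' ht'.1 x ht.2.2 h
        rw [this]
    have h2 : Z.card * (k - 1) ≤
        ∑ w ∈ Z, ((A.filter fun x => w.2.1 * x + w.2.2 ∈ A).erase X0).card := by
      rw [← smul_eq_mul]
      apply Finset.card_nsmul_le_sum
      intro w hw
      have := hL w.2 (Finset.mem_product.mp (hZ hw)).2
      unfold linc at this
      have := Finset.pred_card_le_card_erase (s := A.filter fun x => w.2.1 * x + w.2.2 ∈ A)
        (a := X0)
      omega
    rw [Finset.card_product] at h1
    have h3 : k ≤ 2 * (k - 1) := by omega
    calc Z.card * k ≤ Z.card * (2 * (k - 1)) := by gcongr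
      _ = 2 * (Z.card * (k - 1)) := by ring
      _ ≤ 2 * (A.card * A.card) := Nat.mul_le_mul_left _ (h2.trans h1)
      _ = _ := by ring

lemma rich_lines {p : ℕ} [Fact p.Prime] (A : Finset (ZMod p)) (L : Finset (ZMod p × ZMod p))
    (k : ℕ) (hk : 2 ≤ k) (hL : ∀ l ∈ L, k ≤ linc A l) (hp : A.card * L.card ≤ p ^ 2) :
    k ^ 4 * L.card ≤ 10 ^ 18 * A.card ^ 5 := by
  classical
  rcases L.eq_empty_or_nonempty with rfl | ⟨l0, hl0⟩
  · simp
  have hka : k ≤ A.card := (hL l0 hl0).trans (linc_le A l0)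
  have hLpos : 1 ≤ L.card := Finset.card_pos.mpr ⟨l0, hl0⟩
  have hcf := config_bound p (A ×ˢ L) (2 * A.card ^ 2 / k)
    (fun Z hZ hc => (Nat.le_div_iff_mul_le (by omega)).mpr
      (coll_card A L k hk hka hL Z hZ hc)) (by rw [Finset.card_product]; exact hp)
  set S := ∑ i ∈ A ×ˢ L, ((A ×ˢ L).filter fun j => i.2.2 + i.2.1 * j.1 = j.2.2 + j.2.1 * i.1).card
    with hS
  let r : ZMod p → ℕ := fun y => ((A ×ˢ L).filter fun t => t.2.1 * t.1 + t.2.2 = y).card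
  have hr1 : L.card * k ≤ ∑ y ∈ A, r y := by
    have : ∑ y ∈ A, r y = ∑ l ∈ L, linc A l := by
      have e1 : ∑ y ∈ A, r y = ((A ×ˢ L).filter fun t => t.2.1 * t.1 + t.2.2 ∈ A).card := by
        rw [Finset.card_eq_sum_card_fiberwise (f := fun t => t.2.1 * t.1 + t.2.2) (t := A)]
        · apply Finset.sum_congr rfl
          intro y hy
          simp only [r]
          congr 1
          ext t
          simp only [Finset.mem_filter]
          constructor
          · rintro ⟨h1, h2⟩; exact ⟨⟨h1, h2 ▸ hy⟩, h2⟩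
          · rintro ⟨⟨h1, _⟩, h2⟩; exact ⟨h1, h2⟩
        · intro t ht
          simp at ht
          exact ht.2
      rw [e1, Finset.card_filter, Finset.sum_product_right]
      apply Finset.sum_congr rfl
      intro l _
      rw [linc, Finset.card_filter]
    rw [this, ← smul_eq_mul]
    exact Finset.card_nsmul_le_sum _ _ _ hL
  have hr2 : ∑ y ∈ A, r y ^ 2 ≤ S := by
    have e1 : ∀ y, r y ^ 2 = (((A ×ˢ L) ×ˢ (A ×ˢ L)).filter fun t =>
        t.1.2.1 * t.1.1 + t.1.2.2 = y ∧ t.2.2.1 * t.2.1 + t.2.2.2 = y).card := by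
      intro y
      rw [sq, ← Finset.card_product]
      congr 1
      ext t
      simp only [Finset.mem_product, Finset.mem_filter]
      tauto
    simp only [e1]
    rw [hS, ← Finset.card_sigma, ← Finset.card_sigma]
    apply Finset.card_le_card_of_injOn
      (fun t => ⟨(t.2.1.1, t.2.2.2), (t.2.2.1, t.2.1.2)⟩)
    · rintro ⟨y, ⟨x, l⟩, ⟨x', l'⟩⟩ ht
      simp at ht ⊢
      obtain ⟨_, ⟨⟨h1, h2⟩, h3, h4⟩, h5, h6⟩ := ht
      refine ⟨⟨h1, h4⟩, ⟨h3, h2⟩, ?_⟩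
      linear_combination h6 - h5
    · rintro ⟨y, ⟨x, l⟩, ⟨x', l'⟩⟩ ht ⟨y1, ⟨x1, l1⟩, ⟨x1', l1'⟩⟩ ht1 h
      simp only [Finset.coe_sigma, Set.mem_sigma_iff, Finset.mem_coe, Finset.mem_filter] at ht ht1
      simp only [Sigma.mk.injEq, Prod.mk.injEq, heq_eq_eq] at h
      obtain ⟨⟨rfl, rfl⟩, rfl, rfl⟩ := h
      have := ht.2.2.1.symm.trans ht1.2.2.1
      subst this
      rfl
  have hcs : (∑ y ∈ A, r y) ^ 2 ≤ A.card * ∑ y ∈ A, r y ^ 2 := sq_sum_le_card_mul_sum_sq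
  rw [Finset.card_product] at hcf
  set a := A.card
  set n := L.card
  set s := Nat.sqrt (a * n) with hs
  set k0 := 2 * a ^ 2 / k with hk0
  have hk0' : k0 * k ≤ 2 * a ^ 2 := Nat.div_mul_le_self _ _
  have hs1 : s * s ≤ a * n := Nat.sqrt_le _
  have hs2 : 1 ≤ s := by
    rw [hs, Nat.le_sqrt]; nlinarith
  have m1 : (n * k) ^ 2 ≤ a * (2 * (100000000 * (s + 1) + k0) * (a * n)) := by
    calc (n * k) ^ 2 ≤ (∑ y ∈ A, r y) ^ 2 := by gcongr
      _ ≤ _ := hcs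
      _ ≤ _ := by gcongr; exact hr2.trans hcf
  have m2 : k ^ 2 * n ≤ 2 * a ^ 2 * (100000000 * (s + 1) + k0) := by
    refine Nat.le_of_mul_le_mul_left (c := n) ?_ hLpos
    calc n * (k ^ 2 * n) = (n * k) ^ 2 := by ring
      _ ≤ _ := m1
      _ = _ := by ring
  rcases le_total k0 (100000000 * s) with h | h
  · have m3 : k ^ 2 * n ≤ 600000000 * a ^ 2 * s := by
      calc k ^ 2 * n ≤ 2 * a ^ 2 * (100000000 * (s + 1) + k0) := m2
        _ ≤ 2 * a ^ 2 * (100000000 * (s + s) + 100000000 * s) := by gcongr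
        _ = _ := by ring
    have m4 : n * (k ^ 4 * n) ≤ n * (10 ^ 18 * a ^ 5) := by
      calc n * (k ^ 4 * n) = (k ^ 2 * n) ^ 2 := by ring
        _ ≤ (600000000 * a ^ 2 * s) ^ 2 := by gcongr
        _ = 600000000 ^ 2 * a ^ 4 * (s * s) := by ring
        _ ≤ 600000000 ^ 2 * a ^ 4 * (a * n) := by gcongr
        _ = n * (600000000 ^ 2 * a ^ 5) := by ring
        _ ≤ n * (10 ^ 18 * a ^ 5) :=
          Nat.mul_le_mul_left _ (Nat.mul_le_mul_right _ (by norm_num))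
    exact Nat.le_of_mul_le_mul_left m4 hLpos
  · have m3 : k ^ 2 * n ≤ 600000000 * a ^ 2 * k0 := by
      calc k ^ 2 * n ≤ 2 * a ^ 2 * (100000000 * (s + 1) + k0) := m2
        _ ≤ 2 * a ^ 2 * (100000000 * (s + s) + k0) := by gcongr
        _ = 2 * a ^ 2 * (2 * (100000000 * s) + k0) := by ring
        _ ≤ 2 * a ^ 2 * (2 * k0 + k0) := by gcongr
        _ = 6 * a ^ 2 * k0 := by ring
        _ ≤ _ := Nat.mul_le_mul_right _ (Nat.mul_le_mul_right _ (by norm_num))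
    calc k ^ 4 * n = k ^ 2 * (k ^ 2 * n) := by ring
      _ ≤ k ^ 2 * (600000000 * a ^ 2 * k0) := by gcongr
      _ = 600000000 * a ^ 2 * k * (k0 * k) := by ring
      _ ≤ 600000000 * a ^ 2 * a * (2 * a ^ 2) := by gcongr
      _ = 1200000000 * a ^ 5 := by ring
      _ ≤ _ := Nat.mul_le_mul_right _ (by norm_num)

lemma tail_sum {p : ℕ} [Fact p.Prime] (A : Finset (ZMod p)) : ∀ (d K : ℕ), A.card + 1 ≤ K + d →
    2 ≤ K →
    (∀ k, K ≤ k → A.card * (univ.filter fun l => k ≤ linc A l).card ≤ p ^ 2) →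
    (∑ l ∈ univ.filter (fun l => K ≤ linc A l), linc A l ^ 3) * K ≤
      16 * 10 ^ 18 * A.card ^ 5 := by
  intro d
  induction d with
  | zero =>
    intro K h1 h2 _
    have : (univ.filter fun l => K ≤ linc A l) = ∅ := by
      apply Finset.filter_eq_empty_iff.mpr
      intro l _ h
      have := linc_le A l
      omega
    rw [this]; simp
  | succ d ih =>
    intro K h1 h2 h3
    have h4 := ih (2 * K) (by omega) (by omega) (fun k hk => h3 k (by omega))
    have h5 := rich_lines A (univ.filter fun l => K ≤ linc A l) K h2 (by simp) (h3 K le_rfl)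
    have h6 : ∑ l ∈ univ.filter (fun l => K ≤ linc A l), linc A l ^ 3 ≤
        8 * K ^ 3 * (univ.filter fun l => K ≤ linc A l).card +
        ∑ l ∈ univ.filter (fun l => 2 * K ≤ linc A l), linc A l ^ 3 := by
      rw [← Finset.sum_filter_add_sum_filter_not _ (fun l => 2 * K ≤ linc A l), add_comm]
      apply add_le_add
      · calc _ ≤ ∑ l ∈ (univ.filter (fun l => K ≤ linc A l)).filter
              (fun l => ¬ 2 * K ≤ linc A l), 8 * K ^ 3 := by
              apply Finset.sum_le_sum
              intro l hl
              simp only [Finset.mem_filter] at hl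
              calc linc A l ^ 3 ≤ (2 * K) ^ 3 := by gcongr; omega
                _ = _ := by ring
          _ = ((univ.filter (fun l => K ≤ linc A l)).filter
              (fun l => ¬ 2 * K ≤ linc A l)).card * (8 * K ^ 3) := by
              rw [Finset.sum_const, smul_eq_mul]
          _ ≤ (univ.filter fun l => K ≤ linc A l).card * (8 * K ^ 3) :=
              Nat.mul_le_mul_right _ (Finset.card_filter_le _ _)
          _ = _ := by ring
      · apply Finset.sum_le_sum_of_subset
        intro l hl
        simp only [Finset.mem_filter] at hl ⊢
        exact ⟨hl.1.1, hl.2⟩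
    set n := (univ.filter fun l => K ≤ linc A l).card
    set s2 := ∑ l ∈ univ.filter (fun l => 2 * K ≤ linc A l), linc A l ^ 3
    have h7 := Nat.mul_le_mul_right K h6
    have h8 : (8 * K ^ 3 * n + s2) * K = 8 * (K ^ 4 * n) + s2 * K := by ring
    have h9 : s2 * (2 * K) = 2 * (s2 * K) := by ring
    rw [h8] at h7
    rw [h9] at h4
    linarith

lemma linc_eq {p : ℕ} (A : Finset (ZMod p)) (l : ZMod p × ZMod p) :
    linc A l = ∑ P ∈ A ×ˢ A, if l.1 * P.1 + l.2 = P.2 then 1 else 0 := by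
  rw [linc, Finset.card_filter, Finset.sum_product]
  apply Finset.sum_congr rfl
  intro x _
  simp

lemma nlines1 {p : ℕ} [Fact p.Prime] (P : ZMod p × ZMod p) :
    (univ.filter fun l : ZMod p × ZMod p => l.1 * P.1 + l.2 = P.2).card = p := by
  have : (univ.filter fun l : ZMod p × ZMod p => l.1 * P.1 + l.2 = P.2) =
      univ.image fun m : ZMod p => (m, P.2 - m * P.1) := by
    ext ⟨m, c⟩
    simp only [Finset.mem_filter, Finset.mem_univ, true_and, Finset.mem_image, Prod.mk.injEq]
    constructor
    · intro h; exact ⟨m, rfl, by linear_combination -h⟩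
    · rintro ⟨m', rfl, h⟩; linear_combination -h
  rw [this, Finset.card_image_of_injective _ (fun a b h => (Prod.mk.inj h).1), Finset.card_univ,
    ZMod.card]

lemma line_thru {p : ℕ} [Fact p.Prime] (P Q : ZMod p × ZMod p) (h : P.1 ≠ Q.1) :
    ∃ l0 : ZMod p × ZMod p, l0.1 * P.1 + l0.2 = P.2 ∧ l0.1 * Q.1 + l0.2 = Q.2 ∧
    ∀ l : ZMod p × ZMod p, l.1 * P.1 + l.2 = P.2 → l.1 * Q.1 + l.2 = Q.2 → l = l0 := by
  have hd : Q.1 - P.1 ≠ 0 := sub_ne_zero.mpr h.symm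
  have e : (Q.2 - P.2) / (Q.1 - P.1) * (Q.1 - P.1) = Q.2 - P.2 := div_mul_cancel₀ _ hd
  have e1 : (Q.2 - P.2) / (Q.1 - P.1) * P.1 + (P.2 - (Q.2 - P.2) / (Q.1 - P.1) * P.1) = P.2 := by
    ring
  have e2 : (Q.2 - P.2) / (Q.1 - P.1) * Q.1 + (P.2 - (Q.2 - P.2) / (Q.1 - P.1) * P.1) = Q.2 := by
    linear_combination e
  refine ⟨((Q.2 - P.2) / (Q.1 - P.1), P.2 - (Q.2 - P.2) / (Q.1 - P.1) * P.1), e1, e2, ?_⟩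
  intro l h1 h2
  have h3 : l.1 = (Q.2 - P.2) / (Q.1 - P.1) := by
    rw [eq_div_iff hd]; linear_combination h2 - h1
  refine Prod.ext h3 ?_
  simp only
  rw [← h3]
  linear_combination h1

lemma nlines2 {p : ℕ} [Fact p.Prime] (P Q : ZMod p × ZMod p) :
    (univ.filter fun l : ZMod p × ZMod p => l.1 * P.1 + l.2 = P.2 ∧ l.1 * Q.1 + l.2 = Q.2).card +
      (if P.1 = Q.1 then 1 else 0) = 1 + (if P = Q then p else 0) := by
  by_cases h : P.1 = Q.1
  · by_cases h' : P = Q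
    · subst h'
      simp only [and_self, nlines1, if_true]
      ring
    · rw [if_pos h, if_neg h', Finset.filter_false_of_mem]
      · simp
      · rintro l _ ⟨h1, h2⟩
        rw [← h] at h2
        exact h' (Prod.ext h (h1.symm.trans h2))
  · have h' : P ≠ Q := fun e => h (by rw [e])
    obtain ⟨l0, h1, h2, h3⟩ := line_thru P Q h
    have : (univ.filter fun l : ZMod p × ZMod p =>
        l.1 * P.1 + l.2 = P.2 ∧ l.1 * Q.1 + l.2 = Q.2) = {l0} := by
      ext l
      simp only [Finset.mem_filter, Finset.mem_univ, true_and, Finset.mem_singleton]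
      constructor
      · rintro ⟨a, b⟩; exact h3 l a b
      · rintro rfl; exact ⟨h1, h2⟩
    rw [this, if_neg h, if_neg h']
    simp

lemma nlines3 {p : ℕ} [Fact p.Prime] (P Q R : ZMod p × ZMod p) :
    (univ.filter fun l : ZMod p × ZMod p => (l.1 * P.1 + l.2 = P.2 ∧ l.1 * Q.1 + l.2 = Q.2) ∧
        l.1 * R.1 + l.2 = R.2).card +
      (if P.1 = Q.1 ∧ P.1 = R.1 then 1 else 0) =
      (if (Q.1 - P.1) * (R.2 - P.2) = (R.1 - P.1) * (Q.2 - P.2) then 1 else 0) +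
      (if P = Q ∧ P = R then p else 0) := by
  by_cases h : P.1 = Q.1
  · by_cases hR : P.1 = R.1
    · have hc : (Q.1 - P.1) * (R.2 - P.2) = (R.1 - P.1) * (Q.2 - P.2) := by
        rw [← h, ← hR]; ring
      rw [if_pos ⟨h, hR⟩, if_pos hc, add_comm]
      congr 1
      split_ifs with h'
      · obtain ⟨rfl, rfl⟩ := h'
        simp [nlines1]
      · rw [Finset.filter_false_of_mem]
        · simp
        · rintro l _ ⟨⟨h1, h2⟩, h3⟩
          rw [← h] at h2
          rw [← hR] at h3
          exact h' ⟨Prod.ext h (h1.symm.trans h2), Prod.ext hR (h1.symm.trans h3)⟩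
    · obtain ⟨l0, h1, h2, h3⟩ := line_thru P R hR
      have hPR : ¬ (P = Q ∧ P = R) := fun e => hR (by rw [← e.2])
      rw [if_neg (fun e => hR e.2), if_neg hPR, add_zero, add_zero]
      split_ifs with hc
      · have hQ : P.2 = Q.2 := by
          have : (R.1 - P.1) * (Q.2 - P.2) = 0 := by rw [← hc, ← h]; ring
          rcases mul_eq_zero.mp this with e | e
          · exact absurd (sub_eq_zero.mp e).symm hR
          · exact (sub_eq_zero.mp e).symm
        rw [Finset.card_eq_one]
        refine ⟨l0, ?_⟩
        ext l
        simp only [Finset.mem_filter, Finset.mem_univ, true_and, Finset.mem_singleton]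
        constructor
        · rintro ⟨⟨a, _⟩, b⟩; exact h3 l a b
        · rintro rfl; exact ⟨⟨h1, by rw [← h, ← hQ]; exact h1⟩, h2⟩
      · rw [Finset.filter_false_of_mem]
        · simp
        · rintro l _ ⟨⟨e1, e2⟩, e3⟩
          apply hc
          rw [← e1, ← e2, ← e3]
          ring
  · obtain ⟨l0, h1, h2, h3⟩ := line_thru P Q h
    have hPQ : ¬ (P = Q ∧ P = R) := fun e => h (by rw [← e.1])
    rw [if_neg (fun e => h e.1), if_neg hPQ, add_zero, add_zero]
    split_ifs with hc
    · have hR : l0.1 * R.1 + l0.2 = R.2 := by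
        have hd : Q.1 - P.1 ≠ 0 := sub_ne_zero.mpr (Ne.symm h)
        apply mul_left_cancel₀ hd
        rw [← h1, ← h2] at hc
        linear_combination -hc
      rw [Finset.card_eq_one]
      refine ⟨l0, ?_⟩
      ext l
      simp only [Finset.mem_filter, Finset.mem_univ, true_and, Finset.mem_singleton]
      constructor
      · rintro ⟨⟨a, b⟩, _⟩; exact h3 l a b
      · rintro rfl; exact ⟨⟨h1, h2⟩, hR⟩
    · rw [Finset.filter_false_of_mem]
      · simp
      · rintro l _ ⟨⟨e1, e2⟩, e3⟩
        apply hc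
        rw [← e1, ← e2, ← e3]
        ring

lemma sum_linc1 {p : ℕ} [Fact p.Prime] (A : Finset (ZMod p)) :
    ∑ l, linc A l = p * A.card ^ 2 := by
  simp only [linc_eq]
  rw [Finset.sum_comm]
  simp only [← Finset.card_filter, nlines1, Finset.sum_const, smul_eq_mul, Finset.card_product]
  ring

lemma sum_linc2 {p : ℕ} [Fact p.Prime] (A : Finset (ZMod p)) :
    ∑ l, linc A l ^ 2 + A.card ^ 3 = A.card ^ 4 + p * A.card ^ 2 := by
  have e1 : ∑ l, linc A l ^ 2 = ∑ P ∈ A ×ˢ A, ∑ Q ∈ A ×ˢ A,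
      (univ.filter fun l : ZMod p × ZMod p =>
        l.1 * P.1 + l.2 = P.2 ∧ l.1 * Q.1 + l.2 = Q.2).card := by
    simp only [linc_eq, sq, Finset.sum_mul_sum]
    rw [Finset.sum_comm]
    apply Finset.sum_congr rfl
    intro P _
    rw [Finset.sum_comm]
    apply Finset.sum_congr rfl
    intro Q _
    rw [Finset.card_filter]
    apply Finset.sum_congr rfl
    intro l _
    split_ifs <;> simp_all
  have e2 : ∑ P ∈ A ×ˢ A, ∑ Q ∈ A ×ˢ A, (if P.1 = Q.1 then 1 else 0) = A.card ^ 3 := by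
    have : ∀ P ∈ A ×ˢ A, ∑ Q ∈ A ×ˢ A, (if P.1 = Q.1 then 1 else 0) = A.card := by
      intro P hP
      have hP1 := (Finset.mem_product.mp hP).1
      rw [Finset.sum_product_right]
      simp only [Finset.sum_ite_eq, if_pos hP1, Finset.sum_const, smul_eq_mul, mul_one]
    rw [Finset.sum_congr rfl this, Finset.sum_const, smul_eq_mul, Finset.card_product]
    ring
  have e3 : ∑ P ∈ A ×ˢ A, ∑ Q ∈ A ×ˢ A, (if P = Q then p else 0) = p * A.card ^ 2 := by
    have : ∀ P ∈ A ×ˢ A, ∑ Q ∈ A ×ˢ A, (if P = Q then p else 0) = p := by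
      intro P hP
      rw [Finset.sum_ite_eq, if_pos hP]
    rw [Finset.sum_congr rfl this, Finset.sum_const, smul_eq_mul, Finset.card_product]
    ring
  rw [e1, ← e2, ← e3]
  simp only [← Finset.sum_add_distrib, nlines2]
  simp only [Finset.sum_add_distrib, Finset.sum_const, smul_eq_mul, Finset.card_product]
  ring

lemma sum_linc3 {p : ℕ} [Fact p.Prime] (A : Finset (ZMod p)) :
    ∑ l, linc A l ^ 3 + A.card ^ 4 = collinearTriples p A + p * A.card ^ 2 := by
  have e1 : ∑ l, linc A l ^ 3 = ∑ P ∈ A ×ˢ A, ∑ Q ∈ A ×ˢ A, ∑ R ∈ A ×ˢ A,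
      (univ.filter fun l : ZMod p × ZMod p =>
        (l.1 * P.1 + l.2 = P.2 ∧ l.1 * Q.1 + l.2 = Q.2) ∧ l.1 * R.1 + l.2 = R.2).card := by
    have h0 : ∀ l : ZMod p × ZMod p, linc A l ^ 3 = ∑ P ∈ A ×ˢ A, ∑ Q ∈ A ×ˢ A, ∑ R ∈ A ×ˢ A,
        if (l.1 * P.1 + l.2 = P.2 ∧ l.1 * Q.1 + l.2 = Q.2) ∧ l.1 * R.1 + l.2 = R.2
          then 1 else 0 := by
      intro l
      rw [linc_eq, pow_succ, sq, Finset.sum_mul_sum, Finset.sum_mul]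
      apply Finset.sum_congr rfl
      intro P _
      rw [Finset.sum_mul]
      apply Finset.sum_congr rfl
      intro Q _
      rw [Finset.mul_sum]
      apply Finset.sum_congr rfl
      intro R _
      split_ifs <;> simp_all
    simp only [h0, Finset.card_filter]
    rw [Finset.sum_comm]
    apply Finset.sum_congr rfl
    intro P _
    rw [Finset.sum_comm]
    apply Finset.sum_congr rfl
    intro Q _
    rw [Finset.sum_comm]
  have e2 : ∑ P ∈ A ×ˢ A, ∑ Q ∈ A ×ˢ A, ∑ R ∈ A ×ˢ A,
      (if P.1 = Q.1 ∧ P.1 = R.1 then 1 else 0) = A.card ^ 4 := by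
    have : ∀ P ∈ A ×ˢ A, ∑ Q ∈ A ×ˢ A, ∑ R ∈ A ×ˢ A,
      (if P.1 = Q.1 ∧ P.1 = R.1 then 1 else 0) = A.card ^ 2 := by
      intro P hP
      have hP1 := (Finset.mem_product.mp hP).1
      have h1 : ∑ Q ∈ A ×ˢ A, (if P.1 = Q.1 then 1 else 0) = A.card := by
        rw [Finset.sum_product_right]
        simp only [Finset.sum_ite_eq, if_pos hP1, Finset.sum_const, smul_eq_mul, mul_one]
      calc _ = (∑ Q ∈ A ×ˢ A, (if P.1 = Q.1 then 1 else 0)) *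
          ∑ Q ∈ A ×ˢ A, (if P.1 = Q.1 then 1 else 0) := by
            rw [Finset.sum_mul_sum]
            apply Finset.sum_congr rfl
            intro Q _
            apply Finset.sum_congr rfl
            intro R _
            split_ifs <;> simp_all
        _ = _ := by rw [h1]; ring
    rw [Finset.sum_congr rfl this, Finset.sum_const, smul_eq_mul, Finset.card_product]
    ring
  have e3 : ∑ P ∈ A ×ˢ A, ∑ Q ∈ A ×ˢ A, ∑ R ∈ A ×ˢ A,
      (if P = Q ∧ P = R then p else 0) = p * A.card ^ 2 := by
    have : ∀ P ∈ A ×ˢ A, ∑ Q ∈ A ×ˢ A, ∑ R ∈ A ×ˢ A,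
      (if P = Q ∧ P = R then p else 0) = p := by
      intro P hP
      rw [Finset.sum_eq_single_of_mem P hP, Finset.sum_eq_single_of_mem P hP]
      · simp
      · intro b _ hb
        rw [if_neg (fun h => hb h.2.symm)]
      · intro b _ hb
        apply Finset.sum_eq_zero
        intro R _
        rw [if_neg (fun h => hb h.1.symm)]
    rw [Finset.sum_congr rfl this, Finset.sum_const, smul_eq_mul, Finset.card_product]
    ring
  have e4 : collinearTriples p A = ∑ P ∈ A ×ˢ A, ∑ Q ∈ A ×ˢ A, ∑ R ∈ A ×ˢ A,
      (if (Q.1 - P.1) * (R.2 - P.2) = (R.1 - P.1) * (Q.2 - P.2) then 1 else 0) := by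
    rw [collinearTriples, Finset.card_filter, Finset.sum_product, Finset.sum_product]
  rw [e1, e4, ← e2, ← e3]
  simp only [← Finset.sum_add_distrib, nlines3]

lemma moments {p : ℕ} [Fact p.Prime] (A : Finset (ZMod p)) :
    ∑ l, (linc A l : ℝ) = p * (A.card : ℝ) ^ 2 ∧
    ∑ l, (linc A l : ℝ) ^ 2 = (A.card : ℝ) ^ 4 - (A.card : ℝ) ^ 3 + p * (A.card : ℝ) ^ 2 ∧
    ∑ l, (linc A l : ℝ) ^ 3 = collinearTriples p A - (A.card : ℝ) ^ 4 + p * (A.card : ℝ) ^ 2 := by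
  have h1 : ((∑ l, linc A l : ℕ) : ℝ) = _ := congrArg Nat.cast (sum_linc1 A)
  have h2 : ((∑ l, linc A l ^ 2 + A.card ^ 3 : ℕ) : ℝ) = _ := congrArg Nat.cast (sum_linc2 A)
  have h3 : ((∑ l, linc A l ^ 3 + A.card ^ 4 : ℕ) : ℝ) = _ := congrArg Nat.cast (sum_linc3 A)
  push_cast at h1 h2 h3
  exact ⟨h1, by linarith, by linarith⟩

lemma card_le_prime {p : ℕ} [Fact p.Prime] (A : Finset (ZMod p)) : (A.card : ℝ) ≤ p := by
  have := Finset.card_le_univ A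
  rw [ZMod.card] at this
  exact_mod_cast this

lemma lower_bd {p : ℕ} [Fact p.Prime] (A : Finset (ZMod p)) :
    0 ≤ (collinearTriples p A : ℝ) - (A.card : ℝ) ^ 6 / p := by
  have hp : (0 : ℝ) < p := by exact_mod_cast (Fact.out : p.Prime).pos
  rcases Nat.eq_zero_or_pos A.card with h0 | hpos
  · rw [h0]; simp
  obtain ⟨h1, h2, h3⟩ := moments A
  have hcs := Finset.sum_sq_le_sum_mul_sum_of_sq_eq_mul (univ : Finset (ZMod p × ZMod p))
    (r := fun l => (linc A l : ℝ) ^ 2) (f := fun l => (linc A l : ℝ))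
    (g := fun l => (linc A l : ℝ) ^ 3) (fun _ _ => by positivity) (fun _ _ => by positivity)
    (fun _ _ => by ring)
  rw [h1, h2, h3] at hcs
  have hap := card_le_prime A
  have ha1 : (1 : ℝ) ≤ A.card := by exact_mod_cast hpos
  have hdich : A.card = 1 ∨ (2 : ℝ) ≤ A.card := by
    rcases Nat.lt_or_ge A.card 2 with h | h
    · left; omega
    · right; exact_mod_cast h
  have hdich' : (A.card : ℝ) = 1 ∨ (2 : ℝ) ≤ A.card := hdich.imp_left (fun h => by rw [h]; simp)
  clear hdich hpos h1 h2 h3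
  generalize (A.card : ℝ) = a at *
  generalize (collinearTriples p A : ℝ) = T at *
  generalize (p : ℝ) = q at *
  rw [sub_nonneg, div_le_iff₀ hp]
  have key : 0 ≤ 2 * a * (q - a) + q * (a - 2) + a := by
    rcases hdich' with h | h
    · subst h; nlinarith
    · have := mul_nonneg (by linarith : 0 ≤ 2 * a) (sub_nonneg.mpr hap)
      have := mul_nonneg hp.le (sub_nonneg.mpr h)
      linarith
  have h4 : 0 ≤ a ^ 3 * (2 * a * (q - a) + q * (a - 2) + a) := by positivity
  have h5 : a ^ 2 * (a ^ 3 * (2 * a * (q - a) + q * (a - 2) + a)) ≤ a ^ 2 * (T * q - a ^ 6) := by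
    linarith
  have h6 := le_of_mul_le_mul_left h5 (by positivity)
  linarith

lemma tail_real {p : ℕ} [Fact p.Prime] (A : Finset (ZMod p)) (K : ℕ) (h2 : 2 ≤ K)
    (h3 : ∀ k, K ≤ k → (A.card : ℝ) * (univ.filter fun l => k ≤ linc A l).card ≤ (p : ℝ) ^ 2) :
    (∑ l, if K ≤ linc A l then (linc A l : ℝ) ^ 3 else 0) * K ≤
      16 * 10 ^ 18 * (A.card : ℝ) ^ 5 := by
  have := tail_sum A (A.card + 1) K (by omega) h2 (fun k hk => by exact_mod_cast h3 k hk)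
  rw [← Finset.sum_filter]
  exact_mod_cast this

lemma upper1 {p : ℕ} [Fact p.Prime] (A : Finset (ZMod p)) (hA : 1 ≤ A.card)
    (hap : (A.card : ℝ) ^ 2 ≤ p) :
    (collinearTriples p A : ℝ) ≤ 10 ^ 20 * ((A.card : ℝ) ^ 4 * √(A.card : ℝ)) := by
  obtain ⟨h1, h2, h3⟩ := moments A
  have ha1 : (1 : ℝ) ≤ A.card := by exact_mod_cast hA
  set a : ℝ := (A.card : ℝ) with ha
  set t := √a with ht
  have htt : t * t = a := Real.mul_self_sqrt (by linarith)
  have ht1 : 1 ≤ t := by rw [ht]; exact Real.one_le_sqrt.mpr ha1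
  set K := ⌈2 * t⌉₊ with hKd
  have hK1 : 2 * t ≤ K := Nat.le_ceil _
  have hK2 : (K : ℝ) ≤ 3 * t := by
    have := Nat.ceil_lt_add_one (by linarith : 0 ≤ 2 * t)
    linarith
  have hK : 2 ≤ K := by
    have : (2 : ℝ) ≤ K := by linarith
    exact_mod_cast this
  have hnn : ∀ l, 0 ≤ (linc A l : ℝ) ^ 2 - linc A l := by
    intro l
    have : linc A l ≤ linc A l ^ 2 := Nat.le_self_pow (by norm_num) _
    rw [sub_nonneg]; exact_mod_cast this
  have hS : ∑ l, ((linc A l : ℝ) ^ 2 - linc A l) = a ^ 4 - a ^ 3 := by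
    rw [Finset.sum_sub_distrib, h1, h2]; ring
  have ha3 : 0 ≤ a ^ 3 := by positivity
  have ha4 : 0 ≤ a ^ 4 := by positivity
  have hrich : ∀ k, K ≤ k → a * (univ.filter fun l => k ≤ linc A l).card ≤ (p : ℝ) ^ 2 := by
    intro k hk
    have hkR : 2 * t ≤ (k : ℝ) := hK1.trans (by exact_mod_cast hk)
    have hk2 : (2 : ℝ) ≤ k := by linarith
    have e1 : ((univ.filter fun l => k ≤ linc A l).card : ℝ) * ((k : ℝ) ^ 2 / 2) ≤ a ^ 4 := by
      calc ((univ.filter fun l => k ≤ linc A l).card : ℝ) * ((k : ℝ) ^ 2 / 2)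
          = (univ.filter fun l => k ≤ linc A l).card • ((k : ℝ) ^ 2 / 2) := by
            rw [nsmul_eq_mul]
        _ ≤ ∑ l ∈ univ.filter (fun l => k ≤ linc A l), ((linc A l : ℝ) ^ 2 - linc A l) := by
            apply Finset.card_nsmul_le_sum
            intro l hl
            have : (k : ℝ) ≤ linc A l := by exact_mod_cast (Finset.mem_filter.mp hl).2
            nlinarith
        _ ≤ ∑ l, ((linc A l : ℝ) ^ 2 - linc A l) :=
            Finset.sum_le_sum_of_subset_of_nonneg (Finset.subset_univ _) (fun l _ _ => hnn l)
        _ ≤ a ^ 4 := by rw [hS]; linarith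
    have e2 : 2 * a ≤ (k : ℝ) ^ 2 / 2 := by nlinarith
    have e3 := mul_le_mul_of_nonneg_left e2
      (Nat.cast_nonneg (univ.filter fun l => k ≤ linc A l).card : (0 : ℝ) ≤ _)
    have e4 : a ^ 4 ≤ (p : ℝ) ^ 2 := by
      calc a ^ 4 = (a ^ 2) ^ 2 := by ring
        _ ≤ _ := by gcongr
    linarith
  have htail := tail_real A K hK hrich
  set W := ∑ l, if K ≤ linc A l then (linc A l : ℝ) ^ 3 else 0 with hW
  have hW0 : 0 ≤ W := Finset.sum_nonneg (fun l _ => by split_ifs <;> positivity)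
  have hW1 : W ≤ 8 * 10 ^ 18 * (a ^ 4 * t) := by
    have e1 : W * (2 * t) ≤ 16 * 10 ^ 18 * a ^ 5 :=
      (mul_le_mul_of_nonneg_left hK1 hW0).trans htail
    have e2 : 16 * 10 ^ 18 * a ^ 5 = 8 * 10 ^ 18 * (a ^ 4 * t) * (2 * t) := by
      rw [show a ^ 5 = a ^ 4 * a by ring]
      nth_rewrite 2 [← htt]
      ring
    rw [e2] at e1
    exact le_of_mul_le_mul_right e1 (by linarith)
  have hsum : ∑ l, ((linc A l : ℝ) ^ 3 - linc A l) ≤ K * (a ^ 4 - a ^ 3) + W := by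
    rw [← hS, hW, Finset.mul_sum, ← Finset.sum_add_distrib]
    apply Finset.sum_le_sum
    intro l _
    have hn := hnn l
    split_ifs with h
    · have : 0 ≤ (K : ℝ) * ((linc A l : ℝ) ^ 2 - linc A l) := by positivity
      have : (0 : ℝ) ≤ linc A l := by positivity
      linarith
    · have h' : (linc A l : ℝ) + 1 ≤ K := by exact_mod_cast not_le.mp h
      have := mul_le_mul_of_nonneg_right h' hn
      nlinarith
  rw [Finset.sum_sub_distrib, h1, h3] at hsum
  have f1 : (K : ℝ) * (a ^ 4 - a ^ 3) ≤ 3 * t * a ^ 4 := by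
    calc (K : ℝ) * (a ^ 4 - a ^ 3) ≤ K * a ^ 4 := by gcongr; linarith
      _ ≤ _ := by gcongr
  have f2 : a ^ 4 ≤ a ^ 4 * t := le_mul_of_one_le_right ha4 ht1
  nlinarith

lemma upper2 {p : ℕ} [Fact p.Prime] (A : Finset (ZMod p)) (hA : 1 ≤ A.card)
    (hap : (p : ℝ) ≤ (A.card : ℝ) ^ 2) :
    (collinearTriples p A : ℝ) - (A.card : ℝ) ^ 6 / p ≤
      10 ^ 20 * (√(p : ℝ) * ((A.card : ℝ) ^ 3 * √(A.card : ℝ))) := by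
  obtain ⟨h1, h2, h3⟩ := moments A
  have ha1 : (1 : ℝ) ≤ A.card := by exact_mod_cast hA
  have hle := card_le_prime A
  set a : ℝ := (A.card : ℝ) with ha
  have hp1 : (1 : ℝ) ≤ p := ha1.trans hle
  set q : ℝ := (p : ℝ) with hq
  have hq0 : 0 < q := by linarith
  set sa := √a with hsa
  set sq := √q with hsq
  have haa : sa * sa = a := Real.mul_self_sqrt (by linarith)
  have hqq : sq * sq = q := Real.mul_self_sqrt (by linarith)
  have hsa1 : 1 ≤ sa := by rw [hsa]; exact Real.one_le_sqrt.mpr ha1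
  have hsq1 : 1 ≤ sq := by rw [hsq]; exact Real.one_le_sqrt.mpr hp1
  have hsle : sa ≤ sq := Real.sqrt_le_sqrt hle
  obtain ⟨t, ht⟩ : ∃ t, t = a * sa / sq := ⟨_, rfl⟩
  have htq : t * sq = a * sa := by rw [ht]; field_simp
  have ht0 : 0 < t := by rw [ht]; positivity
  have htt : t * t * q = a ^ 3 := by
    calc t * t * q = (t * sq) * (t * sq) := by rw [← hqq]; ring
      _ = a * a * (sa * sa) := by rw [htq]; ring
      _ = _ := by rw [haa]; ring
  have hsqa : sq ≤ a := by
    rw [hsq]; exact Real.sqrt_le_iff.mpr ⟨by linarith, hap⟩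
  have ht1 : 1 ≤ t := by
    rw [ht, le_div_iff₀ (by linarith)]
    nlinarith
  obtain ⟨μ, hμ⟩ : ∃ μ, μ = a ^ 2 / q := ⟨_, rfl⟩
  have hμq : μ * q = a ^ 2 := by rw [hμ]; field_simp
  have hμ0 : 0 ≤ μ := by rw [hμ]; positivity
  have htq2 : a ^ 2 ≤ t * q := by
    calc a ^ 2 = a * (sa * sa) := by rw [haa]; ring
      _ ≤ a * (sa * sq) := by gcongr
      _ = (t * sq) * sq := by rw [htq]; ring
      _ = t * q := by rw [← hqq]; ring
  have hμt : μ ≤ t := by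
    rw [hμ, div_le_iff₀ hq0]; exact htq2
  set K := ⌈2 * t⌉₊ with hKd
  have hK1 : 2 * t ≤ K := Nat.le_ceil _
  have hK2 : (K : ℝ) ≤ 3 * t := by
    have := Nat.ceil_lt_add_one (by linarith : 0 ≤ 2 * t)
    linarith
  have hK : 2 ≤ K := by
    have : (2 : ℝ) ≤ K := by linarith
    exact_mod_cast this
  have hS : ∑ l, ((linc A l : ℝ) - μ) ^ 2 = q * a ^ 2 - a ^ 3 := by
    have e : ∀ l, ((linc A l : ℝ) - μ) ^ 2 =
        (linc A l : ℝ) ^ 2 - 2 * μ * (linc A l : ℝ) + μ ^ 2 := fun l => by ring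
    simp only [e]
    rw [Finset.sum_add_distrib, Finset.sum_sub_distrib, ← Finset.mul_sum, h1, h2,
      Finset.sum_const, Finset.card_univ, Fintype.card_prod, ZMod.card, nsmul_eq_mul]
    push_cast
    have : (q * q) * μ ^ 2 = a ^ 4 := by
      calc (q * q) * μ ^ 2 = (μ * q) ^ 2 := by ring
        _ = _ := by rw [hμq]; ring
    have h' : 2 * μ * (q * a ^ 2) = 2 * a ^ 4 := by
      calc 2 * μ * (q * a ^ 2) = 2 * (μ * q) * a ^ 2 := by ring
        _ = _ := by rw [hμq]; ring
    rw [← hq, this, h']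
    ring
  have ha3 : 0 ≤ a ^ 3 := by positivity
  have ha2 : 0 < a ^ 2 := by positivity
  have hrich : ∀ k, K ≤ k → a * (univ.filter fun l => k ≤ linc A l).card ≤ q ^ 2 := by
    intro k hk
    have hkR : 2 * t ≤ (k : ℝ) := hK1.trans (by exact_mod_cast hk)
    have e1 : ((univ.filter fun l => k ≤ linc A l).card : ℝ) * t ^ 2 ≤ q * a ^ 2 := by
      calc ((univ.filter fun l => k ≤ linc A l).card : ℝ) * t ^ 2
          = (univ.filter fun l => k ≤ linc A l).card • t ^ 2 := by
            rw [nsmul_eq_mul]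
        _ ≤ ∑ l ∈ univ.filter (fun l => k ≤ linc A l), ((linc A l : ℝ) - μ) ^ 2 := by
            apply Finset.card_nsmul_le_sum
            intro l hl
            have : (k : ℝ) ≤ linc A l := by exact_mod_cast (Finset.mem_filter.mp hl).2
            have : t ≤ (linc A l : ℝ) - μ := by linarith
            gcongr
        _ ≤ ∑ l, ((linc A l : ℝ) - μ) ^ 2 :=
            Finset.sum_le_sum_of_subset_of_nonneg (Finset.subset_univ _)
              (fun l _ _ => sq_nonneg _)
        _ ≤ q * a ^ 2 := by rw [hS]; linarith
    generalize ((univ.filter fun l => k ≤ linc A l).card : ℝ) = n at *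
    have e2 : a ^ 2 * (a * n) ≤ a ^ 2 * q ^ 2 := by
      calc a ^ 2 * (a * n) = n * a ^ 3 := by ring
        _ = (n * t ^ 2) * q := by rw [← htt]; ring
        _ ≤ (q * a ^ 2) * q := by gcongr
        _ = _ := by ring
    exact le_of_mul_le_mul_left e2 ha2
  have htail := tail_real A K hK hrich
  set W := ∑ l, if K ≤ linc A l then (linc A l : ℝ) ^ 3 else 0 with hW
  have hW0 : 0 ≤ W := Finset.sum_nonneg (fun l _ => by split_ifs <;> positivity)
  have hW1 : W ≤ 8 * 10 ^ 18 * (a ^ 2 * q * t) := by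
    have e1 : W * (2 * t) ≤ 16 * 10 ^ 18 * a ^ 5 :=
      (mul_le_mul_of_nonneg_left hK1 hW0).trans htail
    have e2 : 16 * 10 ^ 18 * a ^ 5 = 8 * 10 ^ 18 * (a ^ 2 * q * t) * (2 * t) := by
      rw [show a ^ 5 = a ^ 2 * a ^ 3 by ring, ← htt]
      ring
    rw [e2] at e1
    exact le_of_mul_le_mul_right e1 (by linarith)
  have hsum : ∑ l, ((linc A l : ℝ) - μ) ^ 2 * linc A l ≤ K * (q * a ^ 2 - a ^ 3) + W := by
    rw [← hS, hW, Finset.mul_sum, ← Finset.sum_add_distrib]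
    apply Finset.sum_le_sum
    intro l _
    have hi0 : (0 : ℝ) ≤ linc A l := by positivity
    split_ifs with h
    · have h' : (K : ℝ) ≤ linc A l := by exact_mod_cast h
      have e1 : ((linc A l : ℝ) - μ) ^ 2 ≤ (linc A l : ℝ) ^ 2 := by
        apply pow_le_pow_left₀ <;> linarith
      have e2 := mul_le_mul_of_nonneg_right e1 hi0
      have e3 : 0 ≤ (K : ℝ) * ((linc A l : ℝ) - μ) ^ 2 := by positivity
      calc _ ≤ (linc A l : ℝ) ^ 2 * linc A l := e2
        _ = (linc A l : ℝ) ^ 3 := by ring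
        _ ≤ _ := by linarith
    · have h' : (linc A l : ℝ) ≤ K := by exact_mod_cast (not_le.mp h).le
      have := mul_le_mul_of_nonneg_left h' (sq_nonneg ((linc A l : ℝ) - μ))
      linarith
  have hid : ∑ l, ((linc A l : ℝ) - μ) ^ 2 * linc A l =
      collinearTriples p A - a ^ 6 / q - 3 * a ^ 4 + 2 * (a ^ 5 / q) + q * a ^ 2 := by
    have e : ∀ l, ((linc A l : ℝ) - μ) ^ 2 * linc A l =
        (linc A l : ℝ) ^ 3 - 2 * μ * (linc A l : ℝ) ^ 2 + μ ^ 2 * (linc A l : ℝ) :=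
      fun l => by ring
    simp only [e]
    rw [Finset.sum_add_distrib, Finset.sum_sub_distrib, ← Finset.mul_sum, ← Finset.mul_sum,
      h1, h2, h3, hμ]
    field_simp
    ring
  rw [hid] at hsum
  have f0 : a ^ 2 * q * t = sq * (a ^ 3 * sa) := by
    calc a ^ 2 * q * t = a ^ 2 * sq * (t * sq) := by rw [← hqq]; ring
      _ = _ := by rw [htq]; ring
  rw [← f0]
  have f1 : (K : ℝ) * (q * a ^ 2 - a ^ 3) ≤ 3 * (a ^ 2 * q * t) := by
    calc (K : ℝ) * (q * a ^ 2 - a ^ 3) ≤ K * (q * a ^ 2) := by gcongr; linarith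
      _ ≤ 3 * t * (q * a ^ 2) := by gcongr
      _ = _ := by ring
  have f2 : a ^ 4 ≤ a ^ 2 * q * t := by
    calc a ^ 4 = a ^ 2 * a ^ 2 := by ring
      _ ≤ a ^ 2 * (t * q) := by gcongr
      _ = _ := by ring
  have f3 : 0 ≤ a ^ 5 / q := by positivity
  have f4 : 0 ≤ q * a ^ 2 := by positivity
  have f5 : 0 ≤ a ^ 2 * q * t := by positivity
  linarith

end stmt6aux

theorem stmt6 :
    ∃ C : ℝ,
      ∀ (p : ℕ), p.Prime → Odd p →
        ∀ A : Finset (ZMod p),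
          0 ≤ (collinearTriples p A : ℝ) - (A.card : ℝ) ^ 6 / p ∧
          (collinearTriples p A : ℝ) - (A.card : ℝ) ^ 6 / p ≤
            C * min ((p : ℝ) ^ ((1 : ℝ) / 2) * (A.card : ℝ) ^ ((7 : ℝ) / 2))
              ((A.card : ℝ) ^ ((9 : ℝ) / 2)) := by
  refine ⟨10 ^ 20, ?_⟩
  intro p hp _ A
  haveI : Fact p.Prime := ⟨hp⟩
  refine ⟨lower_bd A, ?_⟩
  rcases Nat.eq_zero_or_pos A.card with h0 | hpos
  · have : A = ∅ := Finset.card_eq_zero.mp h0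
    subst this
    simp [collinearTriples]
  have ha1 : (1 : ℝ) ≤ A.card := by exact_mod_cast hpos
  have ha0 : (0 : ℝ) < A.card := by linarith
  have e7 : (A.card : ℝ) ^ ((7 : ℝ) / 2) = (A.card : ℝ) ^ 3 * √(A.card : ℝ) := by
    rw [Real.sqrt_eq_rpow, ← Real.rpow_natCast, ← Real.rpow_add ha0]
    norm_num
  have e9 : (A.card : ℝ) ^ ((9 : ℝ) / 2) = (A.card : ℝ) ^ 4 * √(A.card : ℝ) := by
    rw [Real.sqrt_eq_rpow, ← Real.rpow_natCast, ← Real.rpow_add ha0]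
    norm_num
  rw [e7, e9, ← Real.sqrt_eq_rpow]
  have hfac : (A.card : ℝ) ^ 4 * √(A.card : ℝ) =
    (A.card : ℝ) * ((A.card : ℝ) ^ 3 * √(A.card : ℝ)) := by ring
  have hnn : 0 ≤ (A.card : ℝ) ^ 3 * √(A.card : ℝ) := by positivity
  rcases le_total ((A.card : ℝ) ^ 2) (p : ℝ) with h | h
  · have hs : (A.card : ℝ) ≤ √(p : ℝ) := Real.le_sqrt_of_sq_le h
    rw [min_eq_right (by rw [hfac]; exact mul_le_mul_of_nonneg_right hs hnn)]
    have h1 := upper1 A hpos h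
    have h2 : 0 ≤ (A.card : ℝ) ^ 6 / p := by positivity
    linarith
  · have hs : √(p : ℝ) ≤ (A.card : ℝ) := Real.sqrt_le_iff.mpr ⟨ha0.le, h⟩
    rw [min_eq_left (by rw [hfac]; exact mul_le_mul_of_nonneg_right hs hnn)]
    exact upper2 A hpos h
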